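/- arXiv:1510.01697 — 4 statements merged into one kernel-verified Lean document; each statement's English description precedes it below -/
import Mathlib

section
/- Let q ≥ 3 be a real number, ε ∈ {0, 1/2, 1, 3/2, 2}, and d, r, a integers with d ≥ 2, r > 0, and 0 ≤ a ≤ d−1. Then |λ_r^a| ≤ max { A(r,s,a) : s ∈ ℤ, max(a−r+1, 0) ≤ s ≤ min(a, d−r) }. -/
/-- The Gaussian binomial coefficient `C_q(n,k)` for a real `q > 1` and integers `n, k`:
`∏_{i=1}^{k} (q^{n−i+1} − 1)/(q^i − 1)` if `0 ≤ k ≤ n`, and `0` otherwise. -/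
noncomputable def gaussBinom (q : ℝ) (n k : ℤ) : ℝ :=
  if 0 ≤ k ∧ k ≤ n then
    ∏ i ∈ Finset.Icc (1 : ℤ) k, (q ^ (n - i + 1) - 1) / (q ^ i - 1)
  else 0

/-- `binom(m,2) = m(m−1)/2`, as a real number. -/
noncomputable def binom2 (m : ℤ) : ℝ := ((m * (m - 1) : ℤ) : ℝ) / 2

/-- `A(r,s,a) := C_q(d−r,s) q^{binom(d−r−s,2) + (d−r−s)ε} C_q(r−1, a−s) q^{binom(r−a+s,2)}`. -/
noncomputable def Aval (q ε : ℝ) (d r s a : ℤ) : ℝ :=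
  gaussBinom q (d - r) s * q ^ (binom2 (d - r - s) + ((d - r - s : ℤ) : ℝ) * ε) *
    gaussBinom q (r - 1) (a - s) * q ^ binom2 (r - a + s)

/-- `λ_r^a := (−1)^{r+a} Σ_{s=max(a−r+1,0)}^{min(a,d−r)} (−1)^s A(r,s,a)`. -/
noncomputable def lamVal (q ε : ℝ) (d r a : ℤ) : ℝ :=
  (-1 : ℝ) ^ (r + a) *
    ∑ s ∈ Finset.Icc (max (a - r + 1) 0) (min a (d - r)),
      (-1 : ℝ) ^ s * Aval q ε d r s a

theorem abs_alternating_sum_le_of_unimodal (g : ℤ → ℝ) (M : ℝ) (L U : ℤ) (hLU : L ≤ U)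
    (hg : ∀ s, L ≤ s → s ≤ U → 0 ≤ g s) (hM : ∀ s, L ≤ s → s ≤ U → g s ≤ M)
    (hu : ∀ s, L ≤ s → s + 2 ≤ U → g (s + 1) ≤ g s → g (s + 2) ≤ g (s + 1)) :
    |∑ s ∈ Finset.Icc L U, (-1 : ℝ) ^ s * g s| ≤ M := by
  set T : ℤ → ℝ := fun N => (-1 : ℝ) ^ N * ∑ s ∈ Finset.Icc L N, (-1 : ℝ) ^ s * g s with hT
  have hsq (N : ℤ) : (-1 : ℝ) ^ N * (-1 : ℝ) ^ N = 1 := by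
    rw [← mul_zpow]; norm_num
  have hTL : T L = g L := by
    simp only [hT, Finset.Icc_self, Finset.sum_singleton]
    rw [← mul_assoc, hsq, one_mul]
  have hTsucc (N : ℤ) (hN : L ≤ N) : T (N + 1) = g (N + 1) - T N := by
    have hI : Finset.Icc L (N + 1) = insert (N + 1) (Finset.Icc L N) := by
      ext x; simp only [Finset.mem_Icc, Finset.mem_insert]; omega
    simp only [hT]
    rw [hI, Finset.sum_insert (by simp), mul_add, ← mul_assoc, hsq,
      zpow_add_one₀ (by norm_num : (-1 : ℝ) ≠ 0)]
    ring
  -- While `g` increases, `T N` lies in `[0, g N]`; the weaker bounds survive the decreasing part.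
  have key (N : ℤ) (hN : L ≤ N) : N ≤ U → (g N - M ≤ T N ∧ T N ≤ M) ∧
      (N + 1 ≤ U → g N < g (N + 1) → 0 ≤ T N ∧ T N ≤ g N) := by
    induction N, hN using Int.leInduction with
    | base =>
      intro h
      have h0 := hg L le_rfl h
      have h1 := hM L le_rfl h
      rw [hTL]
      exact ⟨⟨by linarith, h1⟩, fun _ _ => ⟨h0, le_rfl⟩⟩
    | succ N hN ih =>
      intro h
      obtain ⟨⟨h1, h2⟩, h3⟩ := ih (by omega)
      have h0 := hg (N + 1) (by omega) h
      have h4 := hM (N + 1) (by omega) h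
      rw [hTsucc N hN]
      rcases le_or_gt (g (N + 1)) (g N) with hle | hlt
      · refine ⟨⟨by linarith, by linarith⟩, fun hU hlt => ?_⟩
        have := hu N hN (by omega) hle
        rw [show N + 1 + 1 = N + 2 by ring] at hlt
        linarith
      · obtain ⟨h5, h6⟩ := h3 h hlt
        exact ⟨⟨by linarith, by linarith⟩, fun _ _ => ⟨by linarith, by linarith⟩⟩
  obtain ⟨⟨h1, h2⟩, -⟩ := key U hLU le_rfl
  have h0 := hg U hLU le_rfl
  have habs : |T U| = |∑ s ∈ Finset.Icc L U, (-1 : ℝ) ^ s * g s| := by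
    simp [hT, abs_mul, abs_zpow]
  rw [← habs, abs_le]
  exact ⟨by linarith, h2⟩

theorem gaussBinom_pos {q : ℝ} (hq : 1 < q) {n k : ℤ} (hk : 0 ≤ k) (hkn : k ≤ n) :
    0 < gaussBinom q n k := by
  rw [gaussBinom, if_pos ⟨hk, hkn⟩]
  refine Finset.prod_pos fun i hi => ?_
  rw [Finset.mem_Icc] at hi
  exact div_pos (sub_pos.mpr (one_lt_zpow₀ hq (by omega)))
    (sub_pos.mpr (one_lt_zpow₀ hq (by omega)))

theorem gaussBinom_succ_mul {q : ℝ} (hq : 1 < q) {n k : ℤ} (hk : 0 ≤ k) (hkn : k + 1 ≤ n) :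
    gaussBinom q n (k + 1) * (q ^ (k + 1) - 1) = gaussBinom q n k * (q ^ (n - k) - 1) := by
  have hI : Finset.Icc 1 (k + 1) = insert (k + 1) (Finset.Icc 1 k) := by
    ext x; simp only [Finset.mem_Icc, Finset.mem_insert]; omega
  have hne : q ^ (k + 1) - 1 ≠ 0 := (sub_pos.mpr (one_lt_zpow₀ hq (by omega))).ne'
  rw [gaussBinom, gaussBinom, if_pos ⟨by omega, hkn⟩, if_pos ⟨hk, by omega⟩, hI,
    Finset.prod_insert (by simp), show n - (k + 1) + 1 = n - k by ring]
  field_simp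

theorem rpow_binom2_add_one {q : ℝ} (hq : 0 < q) (m : ℤ) :
    q ^ binom2 (m + 1) = q ^ binom2 m * q ^ m := by
  rw [← Real.rpow_intCast, ← Real.rpow_add hq]
  congr 1
  simp only [binom2]
  push_cast
  ring

theorem Aval_pos {q : ℝ} (hq : 1 < q) (ε : ℝ) {d r s a : ℤ} (hs : 0 ≤ s) (hsd : s ≤ d - r)
    (hsa : s ≤ a) (hra : a - r + 1 ≤ s) : 0 < Aval q ε d r s a := by
  have h1 := gaussBinom_pos hq hs hsd
  have h2 := gaussBinom_pos hq (n := r - 1) (k := a - s) (by omega) (by omega)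
  have h0 : 0 < q := by linarith
  unfold Aval
  positivity

theorem Aval_succ_mul {q : ℝ} (hq : 1 < q) (ε : ℝ) {d r s a : ℤ} (hs : 0 ≤ s)
    (hsd : s + 1 ≤ d - r) (hsa : s + 1 ≤ a) (hra : a - r + 1 ≤ s) :
    Aval q ε d r (s + 1) a * ((q ^ (s + 1) - 1) * (1 - q ^ (a - r - s)) * q ^ ε) =
      Aval q ε d r s a * ((1 - q ^ (s - (d - r))) * (q ^ (a - s) - 1) * q) := by
  have h0 : 0 < q := by linarith
  have hG := gaussBinom_succ_mul hq hs hsd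
  have hH := gaussBinom_succ_mul hq (n := r - 1) (k := a - (s + 1)) (by omega) (by omega)
  rw [show a - (s + 1) + 1 = a - s by ring, show r - 1 - (a - (s + 1)) = r - a + s by ring] at hH
  have hB := rpow_binom2_add_one h0 (r - a + s)
  have hW : q ^ (binom2 (d - r - s) + ((d - r - s : ℤ) : ℝ) * ε) =
      q ^ (binom2 (d - r - (s + 1)) + ((d - r - (s + 1) : ℤ) : ℝ) * ε) *
        (q ^ (d - r - s) * q⁻¹) * q ^ ε := by
    rw [← zpow_sub_one₀ h0.ne', ← Real.rpow_intCast, ← Real.rpow_add h0, ← Real.rpow_add h0]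
    congr 1
    simp only [binom2]
    push_cast
    ring
  have ht : q ^ (a - r - s) = (q ^ (r - a + s))⁻¹ := by
    rw [← zpow_neg]; congr 1; ring
  have hn : q ^ (s - (d - r)) = (q ^ (d - r - s))⁻¹ := by
    rw [← zpow_neg]; congr 1; ring
  have htp : q ^ (r - a + s) ≠ 0 := (zpow_pos h0 _).ne'
  have hnp : q ^ (d - r - s) ≠ 0 := (zpow_pos h0 _).ne'
  unfold Aval
  rw [hW, show r - a + (s + 1) = r - a + s + 1 by ring, hB, ht, hn]
  generalize q ^ (r - a + s) = t at *
  generalize q ^ (d - r - s) = n at *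
  generalize q ^ (binom2 (d - r - (s + 1)) + ((d - r - (s + 1) : ℤ) : ℝ) * ε) = w
  generalize q ^ binom2 (r - a + s) = b
  generalize q ^ ε = e
  field_simp
  linear_combination w * b * e * (gaussBinom q (r - 1) (a - (s + 1)) * (t - 1)) * hG -
    w * b * e * (gaussBinom q (d - r) s * (n - 1)) * hH

theorem Aval_unimodal {q : ℝ} (hq : 1 < q) (ε : ℝ) {d r s a : ℤ} (hs : 0 ≤ s)
    (hsd : s + 2 ≤ d - r) (hsa : s + 2 ≤ a) (hra : a - r + 1 ≤ s)
    (h : Aval q ε d r (s + 1) a ≤ Aval q ε d r s a) :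
    Aval q ε d r (s + 2) a ≤ Aval q ε d r (s + 1) a := by
  have h0 : 0 < q := by linarith
  have he : 0 < q ^ ε := Real.rpow_pos_of_pos h0 ε
  have e1 := Aval_succ_mul hq ε (d := d) hs (by omega) (by omega) hra
  have e2 := Aval_succ_mul hq ε (d := d) (r := r) (s := s + 1) (a := a)
    (by omega) (by omega) (by omega) (by omega)
  rw [show s + 1 + 1 = s + 2 by ring] at e2
  have p0 := Aval_pos hq ε (d := d) (r := r) (s := s) (a := a)
    (by omega) (by omega) (by omega) (by omega)
  have p1 := Aval_pos hq ε (d := d) (r := r) (s := s + 1) (a := a)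
    (by omega) (by omega) (by omega) (by omega)
  have hlt {m : ℤ} (hm : m < 0) : q ^ m < 1 := zpow_lt_one_of_neg₀ hq hm
  have hmono {m n : ℤ} (hmn : m ≤ n) : q ^ m ≤ q ^ n := zpow_le_zpow_right₀ hq.le hmn
  have d1 : 0 < q ^ (s + 1) - 1 := sub_pos.mpr (one_lt_zpow₀ hq (by omega))
  have d2 : 0 < 1 - q ^ (a - r - s) := sub_pos.mpr (hlt (by omega))
  have n1 : 0 < 1 - q ^ (s - (d - r)) := sub_pos.mpr (hlt (by omega))
  have n2 : 0 < q ^ (a - (s + 1)) - 1 := sub_pos.mpr (one_lt_zpow₀ hq (by omega))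
  have hD : (q ^ (s + 1) - 1) * (1 - q ^ (a - r - s)) * q ^ ε ≤
      (q ^ (s + 2) - 1) * (1 - q ^ (a - r - (s + 1))) * q ^ ε := by
    have i1 : q ^ (s + 1) ≤ q ^ (s + 2) := hmono (by omega)
    have i2 : q ^ (a - r - (s + 1)) ≤ q ^ (a - r - s) := hmono (by omega)
    have : 0 ≤ q ^ (s + 2) - 1 := by linarith
    gcongr
  have hN : (1 - q ^ (s + 1 - (d - r))) * (q ^ (a - (s + 1)) - 1) * q ≤
      (1 - q ^ (s - (d - r))) * (q ^ (a - s) - 1) * q := by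
    have i1 : q ^ (s - (d - r)) ≤ q ^ (s + 1 - (d - r)) := hmono (by omega)
    have i2 : q ^ (a - (s + 1)) ≤ q ^ (a - s) := hmono (by omega)
    gcongr
  have hDpos : 0 < (q ^ (s + 1) - 1) * (1 - q ^ (a - r - s)) * q ^ ε := by positivity
  have hND : (1 - q ^ (s - (d - r))) * (q ^ (a - s) - 1) * q ≤
      (q ^ (s + 1) - 1) * (1 - q ^ (a - r - s)) * q ^ ε := by
    refine le_of_mul_le_mul_left ?_ p0
    rw [← e1]
    exact mul_le_mul_of_nonneg_right h hDpos.le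
  refine le_of_mul_le_mul_right ?_ (hDpos.trans_le hD)
  rw [e2]
  exact mul_le_mul_of_nonneg_left (hN.trans (hND.trans hD)) p1.le

theorem stmt11 (q ε : ℝ) (hq : 3 ≤ q)
    (hε : ε ∈ ({0, 1/2, 1, 3/2, 2} : Set ℝ))
    (d r a : ℤ) (hd : 2 ≤ d) (hr : 0 < r) (hrd : r ≤ d)
    (ha : 0 ≤ a) (had : a ≤ d - 1) :
    |lamVal q ε d r a| ≤
      (Finset.Icc (max (a - r + 1) 0) (min a (d - r))).sup'
        (Finset.nonempty_Icc.mpr (by omega)) (fun s => Aval q ε d r s a) := by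
  have hq1 : 1 < q := by linarith
  rw [lamVal, abs_mul, abs_zpow, abs_neg, abs_one, one_zpow, one_mul]
  refine abs_alternating_sum_le_of_unimodal (fun s => Aval q ε d r s a) _ _ _ (by omega)
    (fun s h1 h2 => ?_) (fun s h1 h2 => ?_) (fun s h1 h2 h => ?_)
  · exact (Aval_pos hq1 ε (by omega) (by omega) (by omega) (by omega)).le
  · exact Finset.le_sup' (fun s => Aval q ε d r s a) (Finset.mem_Icc.mpr ⟨h1, h2⟩)
  · exact Aval_unimodal hq1 ε (by omega) (by omega) (by omega) (by omega) h
end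

section
/- Let q ≥ 3 be an integer, ε ∈ {0, 1/2, 1, 3/2, 2}, and d, a integers with d ≥ 2 and 0 ≤ a ≤ d−1. Then: (a) if ε ≥ 1, then |λ_1^a| = max{ |λ_r^a| : 1 ≤ r ≤ d }; (b) if ε ≤ 1, then |λ_d^a| = max{ |λ_r^a| : 1 ≤ r ≤ d }; (c) if d − a is even or ε ≥ 1, then λ_1^a = min{ λ_r^a : 1 ≤ r ≤ d }; (d) if d − a is odd and ε ≤ 1, then λ_d^a = min{ λ_r^a : 1 ≤ r ≤ d }. -/
open Finset Polynomial

/-- The `q`-factorial `∏_{i=1}^{n} (q^i − 1)`, without the normalising powers of `q − 1`. -/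
noncomputable def qFact (q : ℝ) (n : ℕ) : ℝ := ∏ i ∈ range n, (q ^ (i + 1) - 1)

/-- The polynomial `∏_{i=0}^{n-1} (1 + z q^i X)`. -/
noncomputable def qPoly (q z : ℝ) (n : ℕ) : ℝ[X] := ∏ i ∈ range n, (1 + C (z * q ^ i) * X)

lemma qFact_succ (q : ℝ) (n : ℕ) : qFact q (n + 1) = qFact q n * (q ^ (n + 1) - 1) :=
  prod_range_succ _ _

lemma qFact_pos {q : ℝ} (hq : 1 < q) (n : ℕ) : 0 < qFact q n :=
  prod_pos fun i _ => sub_pos.2 (one_lt_pow₀ hq i.succ_ne_zero)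

lemma gaussBinom_add {q : ℝ} (hq : 1 < q) (k l : ℕ) :
    gaussBinom q ((k + l : ℕ) : ℤ) k = qFact q (k + l) / (qFact q k * qFact q l) := by
  have hprod : ∏ i ∈ Icc (1 : ℤ) k, (q ^ (((k + l : ℕ) : ℤ) - i + 1) - 1) / (q ^ i - 1) =
      ∏ i ∈ range k, (q ^ (k + l - i) - 1) / (q ^ (i + 1) - 1) := by
    symm
    refine prod_bij (fun i _ => (i : ℤ) + 1) ?_ ?_ ?_ ?_
    · intro i hi
      simp only [mem_range, mem_Icc] at *
      omega
    · intro i _ j _ h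
      simpa using h
    · intro b hb
      simp only [mem_Icc] at hb
      exact ⟨(b - 1).toNat, by simp only [mem_range]; omega, by omega⟩
    · intro i hi
      simp only [mem_range] at hi
      rw [← zpow_natCast, ← zpow_natCast]
      congr 3
      omega
  have hnum : qFact q (k + l) = qFact q l * ∏ i ∈ range k, (q ^ (k + l - i) - 1) := by
    rw [qFact, add_comm k l, prod_range_add, qFact]
    congr 1
    rw [← prod_range_reflect (fun i => q ^ (l + k - i) - 1)]
    refine prod_congr rfl fun i hi => ?_
    simp only [mem_range] at hi
    congr 2
    omega
  rw [gaussBinom, if_pos ⟨by omega, by omega⟩, hprod, prod_div_distrib, hnum]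
  change _ / qFact q k = _
  have h₁ := (qFact_pos hq k).ne'
  have h₂ := (qFact_pos hq l).ne'
  field_simp

lemma qPoly_succ (q z : ℝ) (n : ℕ) :
    qPoly q z (n + 1) = qPoly q z n * (1 + C (z * q ^ n) * X) :=
  prod_range_succ _ _

lemma coeff_mul_one_add (p : ℝ[X]) (c : ℝ) (k : ℕ) :
    (p * (1 + C c * X)).coeff (k + 1) = p.coeff (k + 1) + c * p.coeff k := by
  rw [mul_add, mul_one, coeff_add, ← mul_assoc, coeff_mul_X, coeff_mul_C, mul_comm c]

lemma coeff_mul_one_add_zero (p : ℝ[X]) (c : ℝ) :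
    (p * (1 + C c * X)).coeff 0 = p.coeff 0 := by
  simp [mul_coeff_zero]

lemma coeff_qPoly_of_lt (q z : ℝ) {n k : ℕ} (h : n < k) : (qPoly q z n).coeff k = 0 := by
  induction n generalizing k with
  | zero => simp [qPoly, coeff_one, h.ne']
  | succ n ih =>
    obtain ⟨k, rfl⟩ : ∃ j, k = j + 1 := ⟨k - 1, by omega⟩
    rw [qPoly_succ, coeff_mul_one_add, ih (by omega), ih (by omega)]
    simp

/-- The `q`-binomial theorem. -/
lemma coeff_qPoly {q : ℝ} (hq : 1 < q) (z : ℝ) (k l : ℕ) :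
    (qPoly q z (k + l)).coeff k =
      qFact q (k + l) / (qFact q k * qFact q l) * (q ^ k.choose 2 * z ^ k) := by
  induction hn : k + l generalizing k l with
  | zero =>
    obtain ⟨rfl, rfl⟩ : k = 0 ∧ l = 0 := by omega
    simp [qPoly, qFact]
  | succ n ih =>
    have hpos := fun n => (qFact_pos hq n).ne'
    rcases k with _ | k
    · obtain rfl : l = n + 1 := by omega
      rw [qPoly_succ, coeff_mul_one_add_zero, ih 0 n (by omega)]
      have h₀ : qFact q 0 = 1 := by simp [qFact]
      simp [h₀, hpos]
    · rw [qPoly_succ, coeff_mul_one_add, ih k l (by omega), Nat.choose_succ_succ' k 1,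
        Nat.choose_one_right]
      have hk : q ^ (k + 1) - 1 ≠ 0 := (sub_pos.2 (one_lt_pow₀ hq k.succ_ne_zero)).ne'
      have hk₁ := hpos k
      rcases l with _ | l
      · obtain rfl : n = k := by omega
        rw [coeff_qPoly_of_lt _ _ (Nat.lt_succ_self n), qFact_succ]
        field_simp
        ring
      · have hl : q ^ (l + 1) - 1 ≠ 0 := (sub_pos.2 (one_lt_pow₀ hq l.succ_ne_zero)).ne'
        have hl₁ := hpos l
        rw [ih (k + 1) l (by omega), Nat.choose_succ_succ' k 1, Nat.choose_one_right]
        obtain rfl : n = k + l + 1 := by omega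
        simp only [qFact_succ]
        field_simp
        ring

lemma coeff_prod_mono {ι : Type*} (s : Finset ι) (f g : ι → ℝ) (hf : ∀ i ∈ s, 0 ≤ f i)
    (hfg : ∀ i ∈ s, f i ≤ g i) (k : ℕ) :
    0 ≤ (∏ i ∈ s, (1 + C (f i) * X)).coeff k ∧
      (∏ i ∈ s, (1 + C (f i) * X)).coeff k ≤ (∏ i ∈ s, (1 + C (g i) * X)).coeff k := by
  classical
  induction s using Finset.induction_on generalizing k with
  | empty =>
    simp only [prod_empty, le_refl, and_true, coeff_one]
    split_ifs <;> simp
  | insert i s hi ih =>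
    have ih := ih (fun j hj => hf j (mem_insert_of_mem hj)) fun j hj =>
      hfg j (mem_insert_of_mem hj)
    have hfi := hf i (mem_insert_self i s)
    have hgi := hfg i (mem_insert_self i s)
    rw [prod_insert hi, prod_insert hi, mul_comm, mul_comm (1 + C (g i) * X)]
    rcases k with _ | k
    · simpa only [coeff_mul_one_add_zero] using ih 0
    · simp only [coeff_mul_one_add]
      exact ⟨add_nonneg (ih _).1 (mul_nonneg hfi (ih _).1),
        add_le_add (ih _).2 (mul_le_mul hgi (ih _).2 (ih _).1 (hfi.trans hgi))⟩

lemma coeff_qPoly_nonneg {q z : ℝ} (hq : 0 ≤ q) (hz : 0 ≤ z) (n k : ℕ) :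
    0 ≤ (qPoly q z n).coeff k :=
  (coeff_prod_mono _ _ _ (fun _ _ => by positivity) (fun _ _ => le_rfl) k).1

lemma qPoly_add (q z : ℝ) (m j : ℕ) :
    qPoly q z (m + j) = qPoly q z m * qPoly q (z * q ^ m) j := by
  simp only [qPoly, prod_range_add, pow_add, mul_assoc]

/-- Replacing the parameters of the second factor by the continuation of the first one
increases all coefficients. -/
lemma coeff_qPoly_mul_le {q z w : ℝ} (hq : 0 ≤ q) (hz : 0 ≤ z) (hw : 0 ≤ w) (m j t : ℕ)
    (h : j = 0 ∨ w ≤ z * q ^ m) :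
    (qPoly q z m * qPoly q w j).coeff t ≤ (qPoly q z (m + j)).coeff t := by
  rw [qPoly_add, coeff_mul, coeff_mul]
  refine sum_le_sum fun p _ => mul_le_mul_of_nonneg_left ?_ (coeff_qPoly_nonneg hq hz _ _)
  refine (coeff_prod_mono _ _ _ (fun i _ => by positivity) (fun i hi => ?_) _).2
  rcases h with rfl | h
  · simp at hi
  · exact mul_le_mul_of_nonneg_right h (by positivity)

lemma rpow_binom2 {q : ℝ} (k : ℕ) : q ^ binom2 k = q ^ k.choose 2 := by
  rw [← Real.rpow_natCast, Nat.cast_choose_two, binom2]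
  push_cast
  rfl

lemma Aval_eq {q : ℝ} (hq : 1 < q) (ε : ℝ) {d r s a : ℤ} {m j u v : ℕ} (hm : d - r = m)
    (hj : r - 1 = j) (hs : 0 ≤ s) (hsa : s ≤ a) (hu : d - r - s = u) (hv : r - 1 - (a - s) = v) :
    Aval q ε d r s a = (qPoly q (q ^ ε) m).coeff u * (qPoly q q j).coeff v := by
  obtain ⟨s, rfl⟩ := Int.eq_ofNat_of_zero_le hs
  obtain ⟨w, hw⟩ := Int.eq_ofNat_of_zero_le (sub_nonneg.2 hsa)
  obtain rfl : m = s + u := by omega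
  obtain rfl : j = w + v := by omega
  have h₀ : 0 < q := by linarith
  have hva : r - a + (s : ℤ) = ((v + 1 : ℕ) : ℤ) := by push_cast; omega
  rw [Aval, hu, hm, hj, hw, hva, gaussBinom_add hq, gaussBinom_add hq, Real.rpow_add h₀,
    rpow_binom2, rpow_binom2, Nat.choose_succ_succ' v 1, Nat.choose_one_right, add_comm s u,
    add_comm w v, coeff_qPoly hq, coeff_qPoly hq, Int.cast_natCast, mul_comm (u : ℝ) ε,
    Real.rpow_mul h₀.le, Real.rpow_natCast]
  ring

lemma abs_lamVal_le {q : ℝ} (hq : 1 < q) (ε : ℝ) {d r a : ℤ} {m j t : ℕ} (hm : d - r = m)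
    (hj : r - 1 = j) (ht : d - 1 - a = t) :
    |lamVal q ε d r a| ≤ (qPoly q (q ^ ε) m * qPoly q q j).coeff t := by
  have h₀ : 0 ≤ q := by linarith
  have hnn (p : ℕ × ℕ) : 0 ≤ (qPoly q (q ^ ε) m).coeff p.1 * (qPoly q q j).coeff p.2 :=
    mul_nonneg (coeff_qPoly_nonneg h₀ (Real.rpow_nonneg h₀ _) _ _) (coeff_qPoly_nonneg h₀ h₀ _ _)
  let φ : ℤ → ℕ × ℕ := fun s => ((d - r - s).toNat, (r - 1 - (a - s)).toNat)
  rw [lamVal, abs_mul, abs_zpow, abs_neg, abs_one, one_zpow, one_mul, coeff_mul]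
  calc _ ≤ ∑ s ∈ Icc (max (a - r + 1) 0) (min a (d - r)),
        (qPoly q (q ^ ε) m).coeff (φ s).1 * (qPoly q q j).coeff (φ s).2 := by
        refine (abs_sum_le_sum_abs _ _).trans (sum_le_sum fun s hs => ?_)
        simp only [mem_Icc, max_le_iff, le_min_iff] at hs
        rw [abs_mul, abs_zpow, abs_neg, abs_one, one_zpow, one_mul,
          Aval_eq hq ε (u := (φ s).1) (v := (φ s).2) hm hj hs.1.2 hs.2.1
            (by simp only [φ]; omega) (by simp only [φ]; omega), abs_of_nonneg (hnn (φ s))]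
    _ = ∑ p ∈ (Icc (max (a - r + 1) 0) (min a (d - r))).image φ,
        (qPoly q (q ^ ε) m).coeff p.1 * (qPoly q q j).coeff p.2 := by
        rw [sum_image]
        intro s hs s' hs' h
        simp only [coe_Icc, Set.mem_Icc, max_le_iff, le_min_iff] at hs hs'
        simp only [φ, Prod.mk.injEq] at h
        omega
    _ ≤ _ := by
        refine sum_le_sum_of_subset_of_nonneg (fun p hp => ?_) fun p _ _ => hnn p
        obtain ⟨s, hs, rfl⟩ := mem_image.1 hp
        simp only [mem_Icc, max_le_iff, le_min_iff] at hs
        simp only [φ, HasAntidiagonal.mem_antidiagonal]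
        omega

lemma lamVal_one {q : ℝ} (hq : 1 < q) (ε : ℝ) {d a : ℤ} {n t : ℕ} (ha : 0 ≤ a) (hn : d - 1 = n)
    (ht : d - 1 - a = t) : lamVal q ε d 1 a = -(qPoly q (q ^ ε) n).coeff t := by
  have hI : Icc (max (a - 1 + 1) 0) (min a (d - 1)) = {a} := by
    rw [← Icc_self]
    congr 1 <;> omega
  rw [lamVal, hI, sum_singleton, Aval_eq hq ε (m := n) (j := 0) (u := t) (v := 0) hn rfl ha le_rfl
    ht (by simp), ← mul_assoc, ← zpow_add₀ (by norm_num)]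
  rw [Odd.neg_one_zpow ⟨a, by ring⟩]
  simp [qPoly]

lemma lamVal_self {q : ℝ} (hq : 1 < q) (ε : ℝ) {d a : ℤ} {n t : ℕ} (ha : 0 ≤ a) (hn : d - 1 = n)
    (ht : d - 1 - a = t) : lamVal q ε d d a = (-1) ^ (d + a) * (qPoly q q n).coeff t := by
  have hI : Icc (max (a - d + 1) 0) (min a (d - d)) = {0} := by
    rw [← Icc_self]
    congr 1 <;> omega
  rw [lamVal, hI, sum_singleton, Aval_eq hq ε (m := 0) (j := n) (u := 0) (v := t) (by simp) hn
    le_rfl ha (by simp) (by omega)]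
  simp [qPoly]

theorem stmt12 (q : ℕ) (hq : 3 ≤ q) (ε : ℝ)
    (hε : ε ∈ ({0, 1/2, 1, 3/2, 2} : Set ℝ))
    (d a : ℤ) (hd : 2 ≤ d) (ha : 0 ≤ a) (had : a ≤ d - 1) :
    (1 ≤ ε → ∀ r : ℤ, 1 ≤ r → r ≤ d →
      |lamVal (q : ℝ) ε d r a| ≤ |lamVal (q : ℝ) ε d 1 a|) ∧
    (ε ≤ 1 → ∀ r : ℤ, 1 ≤ r → r ≤ d →
      |lamVal (q : ℝ) ε d r a| ≤ |lamVal (q : ℝ) ε d d a|) ∧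
    ((Even (d - a) ∨ 1 ≤ ε) → ∀ r : ℤ, 1 ≤ r → r ≤ d →
      lamVal (q : ℝ) ε d 1 a ≤ lamVal (q : ℝ) ε d r a) ∧
    ((Odd (d - a) ∧ ε ≤ 1) → ∀ r : ℤ, 1 ≤ r → r ≤ d →
      lamVal (q : ℝ) ε d d a ≤ lamVal (q : ℝ) ε d r a) := by
  have hq₁ : (1 : ℝ) < q := by exact_mod_cast (by omega : 1 < q)
  have hq₀ : (0 : ℝ) ≤ q := by linarith
  have hε₀ : 0 ≤ ε := by
    simp only [Set.mem_insert_iff, Set.mem_singleton_iff] at hε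
    rcases hε with rfl | rfl | rfl | rfl | rfl <;> norm_num
  have hz : (0 : ℝ) ≤ (q : ℝ) ^ ε := Real.rpow_nonneg hq₀ _
  obtain ⟨n, hn⟩ := Int.eq_ofNat_of_zero_le (by omega : 0 ≤ d - 1)
  obtain ⟨t, ht⟩ := Int.eq_ofNat_of_zero_le (by omega : 0 ≤ d - 1 - a)
  have hone := lamVal_one hq₁ ε ha hn ht
  have hself := lamVal_self hq₁ ε ha hn ht
  have hcoeff := coeff_qPoly_nonneg hq₀ hz n t
  have hcoeff' := coeff_qPoly_nonneg hq₀ hq₀ n t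
  have key₁ (r : ℤ) (hr : 1 ≤ r) (hrd : r ≤ d) (h : 1 ≤ ε ∨ r < d) :
      |lamVal q ε d r a| ≤ (qPoly q (q ^ ε) n).coeff t := by
    obtain ⟨m, hm⟩ := Int.eq_ofNat_of_zero_le (by omega : 0 ≤ d - r)
    obtain ⟨j, hj⟩ := Int.eq_ofNat_of_zero_le (by omega : 0 ≤ r - 1)
    obtain rfl : n = m + j := by omega
    refine (abs_lamVal_le hq₁ ε hm hj ht).trans (coeff_qPoly_mul_le hq₀ hz hq₀ m j t (Or.inr ?_))
    rcases h with h | h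
    · calc (q : ℝ) = (q : ℝ) ^ (1 : ℝ) := (Real.rpow_one _).symm
        _ ≤ (q : ℝ) ^ ε := Real.rpow_le_rpow_of_exponent_le hq₁.le h
        _ ≤ _ := le_mul_of_one_le_right hz (one_le_pow₀ hq₁.le)
    · calc (q : ℝ) ≤ (q : ℝ) ^ m := le_self_pow₀ hq₁.le (by omega)
        _ ≤ _ := le_mul_of_one_le_left (by positivity) (Real.one_le_rpow hq₁.le hε₀)
  have key₂ (hε₁ : ε ≤ 1) (r : ℤ) (hr : 1 ≤ r) (hrd : r ≤ d) :
      |lamVal q ε d r a| ≤ (qPoly q q n).coeff t := by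
    obtain ⟨m, hm⟩ := Int.eq_ofNat_of_zero_le (by omega : 0 ≤ d - r)
    obtain ⟨j, hj⟩ := Int.eq_ofNat_of_zero_le (by omega : 0 ≤ r - 1)
    obtain rfl : n = j + m := by omega
    refine (abs_lamVal_le hq₁ ε hm hj ht).trans ?_
    rw [mul_comm]
    refine coeff_qPoly_mul_le hq₀ hq₀ hz j m t (Or.inr ?_)
    calc (q : ℝ) ^ ε ≤ (q : ℝ) ^ (1 : ℝ) := Real.rpow_le_rpow_of_exponent_le hq₁.le hε₁
      _ = q := Real.rpow_one _
      _ ≤ _ := le_mul_of_one_le_right hq₀ (one_le_pow₀ hq₁.le)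
  refine ⟨fun h r hr hrd => ?_, fun h r hr hrd => ?_, fun h r hr hrd => ?_, fun h r hr hrd => ?_⟩
  · rw [hone, abs_neg, abs_of_nonneg hcoeff]
    exact key₁ r hr hrd (Or.inl h)
  · rw [hself, abs_mul, abs_zpow, abs_neg, abs_one, one_zpow, one_mul, abs_of_nonneg hcoeff']
    exact key₂ h r hr hrd
  · rw [hone]
    by_cases hlt : 1 ≤ ε ∨ r < d
    · exact (abs_le.1 (key₁ r hr hrd hlt)).1
    · obtain ⟨hε₁, hrd'⟩ := not_or.1 hlt
      obtain rfl : r = d := by omega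
      have heven : Even (r + a) := by
        rcases h.resolve_right hε₁ with ⟨c, hc⟩
        exact ⟨c + a, by omega⟩
      rw [hself, heven.neg_one_zpow, one_mul]
      linarith
  · have hodd : Odd (d + a) := by
      rcases h.1 with ⟨c, hc⟩
      exact ⟨c + a, by omega⟩
    rw [hself, hodd.neg_one_zpow, neg_one_mul]
    exact (abs_le.1 (key₂ h.2 r hr hrd)).1
end

section
/- Let q ≥ 3 be a prime power and let t and d be integers with t even and 0 ≤ t ≤ √(8d/5) − 2 (equivalently, 5(t+2)² ≤ 8d). Then a (d,t)-EKR set Y of generators of the symplectic polar space W(2d−1,q) has maximum cardinality among all (d,t)-EKR sets if and only if there exists a generator G such that Y is exactly the set of all generators W with dim(W ∩ G) ≥ d − t/2. -/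
open Module Finset

section LinearAlgebra

variable {F V : Type*} [Field F] [AddCommGroup V] [Module F V] [FiniteDimensional F V]

theorem finrank_inf_ker_add_one {E : Submodule F V} {f : V →ₗ[F] F}
    (h : ∃ x ∈ E, f x ≠ 0) : finrank F ↥(E ⊓ LinearMap.ker f) + 1 = finrank F E := by
  have hf : f ≠ 0 := by
    rintro rfl
    obtain ⟨x, -, hx⟩ := h
    exact hx rfl
  have h1 := Submodule.finrank_sup_add_finrank_inf_eq E (LinearMap.ker f)
  have h2 := Module.Dual.finrank_ker_add_one_of_ne_zero hf
  have h3 : LinearMap.ker f < E ⊔ LinearMap.ker f := by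
    refine lt_of_le_of_ne le_sup_right fun he => ?_
    obtain ⟨x, hxE, hx⟩ := h
    exact hx (LinearMap.mem_ker.1 (he ▸ Submodule.mem_sup_left hxE))
  have h4 := Submodule.finrank_lt_finrank_of_lt h3
  have h5 := Submodule.finrank_le (E ⊔ LinearMap.ker f)
  lia

theorem finrank_sup_span_singleton_add_one {E : Submodule F V} {x : V} (hx : x ∉ E) :
    finrank F ↥(E ⊔ Submodule.span F {x}) = finrank F E + 1 := by
  have hx0 : x ≠ 0 := fun h => hx (h ▸ E.zero_mem)
  have h1 := Submodule.finrank_sup_add_finrank_inf_eq E (Submodule.span F {x})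
  have h2 : E ⊓ Submodule.span F {x} = ⊥ := by
    rw [← disjoint_iff, Submodule.disjoint_span_singleton' hx0]
    exact hx
  rw [h2, finrank_bot, finrank_span_singleton hx0] at h1
  lia

theorem exists_le_finrank_eq (E : Submodule F V) {m : ℕ} (hm : m ≤ finrank F E) :
    ∃ D ≤ E, finrank F D = m := by
  induction m with
  | zero => exact ⟨⊥, bot_le, finrank_bot F V⟩
  | succ m ih =>
    obtain ⟨D, hDE, hD⟩ := ih (Nat.le_of_succ_le hm)
    have hlt : D < E := lt_of_le_of_ne hDE (by rintro rfl; lia)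
    obtain ⟨x, hxE, hxD⟩ := SetLike.exists_of_lt hlt
    refine ⟨D ⊔ Submodule.span F {x}, sup_le hDE ?_, ?_⟩
    · rwa [Submodule.span_singleton_le_iff_mem]
    · rw [finrank_sup_span_singleton_add_one hxD, hD]

end LinearAlgebra

section Symplectic

variable {F V : Type*} [Field F] [AddCommGroup V] [Module F V]

/-- Totally isotropic subspaces of dimension `d`. -/
def IsGenerator (B : LinearMap.BilinForm F V) (d : ℕ) (W : Submodule F V) : Prop :=
  finrank F W = d ∧ ∀ x ∈ W, ∀ y ∈ W, B x y = 0

variable {B : LinearMap.BilinForm F V} {d : ℕ}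

theorem isAlt_eq_zero_comm (hB : B.IsAlt) {x y : V} : B x y = 0 ↔ B y x = 0 :=
  ⟨fun h => hB.isRefl x y h, fun h => hB.isRefl y x h⟩

theorem isotropic_sup (hB : B.IsAlt) {U W : Submodule F V}
    (hU : ∀ x ∈ U, ∀ y ∈ U, B x y = 0) (hW : ∀ x ∈ W, ∀ y ∈ W, B x y = 0)
    (hUW : ∀ x ∈ U, ∀ y ∈ W, B x y = 0) : ∀ x ∈ U ⊔ W, ∀ y ∈ U ⊔ W, B x y = 0 := by
  intro x hx y hy
  obtain ⟨a, ha, b, hb, rfl⟩ := Submodule.mem_sup.1 hx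
  obtain ⟨a', ha', b', hb', rfl⟩ := Submodule.mem_sup.1 hy
  simp [hU a ha a' ha', hW b hb b' hb', hUW a ha b' hb', (isAlt_eq_zero_comm hB).1 (hUW a' ha' b hb)]

theorem isotropic_sup_span_singleton (hB : B.IsAlt) {U : Submodule F V} {v : V}
    (hU : ∀ x ∈ U, ∀ y ∈ U, B x y = 0) (hv : ∀ x ∈ U, B x v = 0) :
    ∀ x ∈ U ⊔ Submodule.span F {v}, ∀ y ∈ U ⊔ Submodule.span F {v}, B x y = 0 := by
  refine isotropic_sup hB hU ?_ ?_
  · intro x hx y hy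
    obtain ⟨a, rfl⟩ := Submodule.mem_span_singleton.1 hx
    obtain ⟨b, rfl⟩ := Submodule.mem_span_singleton.1 hy
    simp [hB.self_eq_zero v]
  · intro x hx y hy
    obtain ⟨b, rfl⟩ := Submodule.mem_span_singleton.1 hy
    simp [hv x hx]

/-- If `P = W ⊓ W₁`, `Q = W ⊓ W₂`, `A = W₁ ⊓ W₂`, then `P ⊔ Q ⊔ A` is isotropic. -/
theorem isotropic_sup_inf_inf (hB : B.IsAlt) {W W₁ W₂ : Submodule F V} (hW : IsGenerator B d W)
    (h₁ : IsGenerator B d W₁) (h₂ : IsGenerator B d W₂) :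
    ∀ x ∈ (W ⊓ W₁) ⊔ (W ⊓ W₂) ⊔ (W₁ ⊓ W₂), ∀ y ∈ (W ⊓ W₁) ⊔ (W ⊓ W₂) ⊔ (W₁ ⊓ W₂),
      B x y = 0 := by
  refine isotropic_sup hB ?_ (fun x hx y hy => h₁.2 x hx.1 y hy.1) ?_
  · refine isotropic_sup hB ?_ ?_ ?_ <;> intro x hx y hy <;> exact hW.2 x hx.1 y hy.1
  · intro x hx y hy
    obtain ⟨a, ha, b, hb, rfl⟩ := Submodule.mem_sup.1 hx
    simp [h₁.2 a ha.2 y hy.1, h₂.2 b hb.2 y hy.2]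

variable [FiniteDimensional F V]

theorem finrank_add_finrank_orthogonal_eq (hn : B.Nondegenerate) (hV : finrank F V = 2 * d)
    (W : Submodule F V) : finrank F W + finrank F (B.orthogonal W) = 2 * d := by
  have := LinearMap.BilinForm.finrank_orthogonal hn W
  have := Submodule.finrank_le W
  lia

theorem finrank_le_of_isotropic (hn : B.Nondegenerate) (hV : finrank F V = 2 * d)
    {W : Submodule F V} (hW : ∀ x ∈ W, ∀ y ∈ W, B x y = 0) : finrank F W ≤ d := by
  have h1 := finrank_add_finrank_orthogonal_eq hn hV W
  have h2 : W ≤ B.orthogonal W := fun x hx y hy => hW y hy x hx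
  have := Submodule.finrank_mono h2
  lia

theorem IsGenerator.orthogonal_eq (hn : B.Nondegenerate) (hV : finrank F V = 2 * d)
    {W : Submodule F V} (hW : IsGenerator B d W) : B.orthogonal W = W := by
  have h1 := finrank_add_finrank_orthogonal_eq hn hV W
  have h2 : W ≤ B.orthogonal W := fun x hx y hy => hW.2 y hy x hx
  refine (Submodule.eq_of_le_of_finrank_le h2 ?_).symm
  have := hW.1
  lia

theorem IsGenerator.mem_of_forall (hn : B.Nondegenerate) (hV : finrank F V = 2 * d)
    {W : Submodule F V} (hW : IsGenerator B d W) {v : V} (hv : ∀ x ∈ W, B x v = 0) : v ∈ W := by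
  rw [← hW.orthogonal_eq hn hV]
  exact hv

theorem exists_isGenerator (hn : B.Nondegenerate) (hB : B.IsAlt) (hV : finrank F V = 2 * d) :
    ∃ W, IsGenerator B d W := by
  obtain ⟨W, hW⟩ := exists_maximal_of_wellFoundedGT
    (fun W : Submodule F V => ∀ x ∈ W, ∀ y ∈ W, B x y = 0)
    ⟨⊥, fun x hx y _ => by simp [(Submodule.mem_bot F).1 hx]⟩
  refine ⟨W, ?_, hW.prop⟩
  have h1 := finrank_add_finrank_orthogonal_eq hn hV W
  have h2 : B.orthogonal W ≤ W := fun v hv =>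
    hW.le_of_ge (isotropic_sup_span_singleton hB hW.prop hv) le_sup_left
      (Submodule.mem_sup_right (Submodule.mem_span_singleton_self v))
  have h3 := Submodule.finrank_mono h2
  have h4 := finrank_le_of_isotropic hn hV hW.prop
  lia

theorem finrank_sup_inf_inf {W W₁ W₂ : Submodule F V} :
    finrank F ↥((W ⊓ W₁) ⊔ (W ⊓ W₂) ⊔ (W₁ ⊓ W₂)) + 2 * finrank F ↥(W ⊓ (W₁ ⊓ W₂)) =
      finrank F ↥(W ⊓ W₁) + finrank F ↥(W ⊓ W₂) + finrank F ↥(W₁ ⊓ W₂) := by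
  have h1 := Submodule.finrank_sup_add_finrank_inf_eq (W ⊓ W₁) (W ⊓ W₂)
  have h2 := Submodule.finrank_sup_add_finrank_inf_eq ((W ⊓ W₁) ⊔ (W ⊓ W₂)) (W₁ ⊓ W₂)
  have h3 : (W ⊓ W₁) ⊓ (W ⊓ W₂) = W ⊓ (W₁ ⊓ W₂) := inf_inf_distrib_left _ _ _ |>.symm
  have h4 : ((W ⊓ W₁) ⊔ (W ⊓ W₂)) ⊓ (W₁ ⊓ W₂) = W ⊓ (W₁ ⊓ W₂) := by
    apply le_antisymm
    · exact inf_le_inf_right _ (sup_le inf_le_left inf_le_left)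
    · refine le_inf (le_trans ?_ le_sup_left) inf_le_right
      exact inf_le_inf_left _ inf_le_left
  rw [h3] at h1
  rw [h4] at h2
  lia

/-- A generator close to `W` and containing `W₁ ⊓ W₂`. -/
theorem exists_center (hn : B.Nondegenerate) (hB : B.IsAlt) (hV : finrank F V = 2 * d)
    {e : ℕ} {W W₁ W₂ : Submodule F V} (hW : IsGenerator B d W)
    (h₁ : IsGenerator B d W₁) (h₂ : IsGenerator B d W₂)
    (hW₁ : d ≤ finrank F ↥(W ⊓ W₁) + 2 * e) (hW₂ : d ≤ finrank F ↥(W ⊓ W₂) + 2 * e)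
    (hA : finrank F ↥(W₁ ⊓ W₂) + 2 * e = d)
    (hD : finrank F ↥(W ⊓ (W₁ ⊓ W₂)) + 3 * e = d) :
    ∃ G, IsGenerator B d G ∧ W₁ ⊓ W₂ ≤ G ∧ d ≤ finrank F ↥(W ⊓ G) + e := by
  have h := finrank_sup_inf_inf (W := W) (W₁ := W₁) (W₂ := W₂)
  have hi := isotropic_sup_inf_inf hB hW h₁ h₂
  have hle := finrank_le_of_isotropic hn hV hi
  refine ⟨_, ⟨by lia, hi⟩, le_sup_right, ?_⟩
  have h1 := Submodule.finrank_sup_add_finrank_inf_eq (W ⊓ W₁) (W ⊓ W₂)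
  have h3 : (W ⊓ W₁) ⊓ (W ⊓ W₂) = W ⊓ (W₁ ⊓ W₂) := inf_inf_distrib_left _ _ _ |>.symm
  have h4 : (W ⊓ W₁) ⊔ (W ⊓ W₂) ≤ W ⊓ ((W ⊓ W₁) ⊔ (W ⊓ W₂) ⊔ (W₁ ⊓ W₂)) :=
    le_inf (sup_le inf_le_left inf_le_left) le_sup_left
  have := Submodule.finrank_mono h4
  rw [h3] at h1
  lia

theorem mem_ball_of_sup_eq (hn : B.Nondegenerate) (hV : finrank F V = 2 * d)
    {e : ℕ} {W W₀ G A : Submodule F V} (hW : IsGenerator B d W) (hW₀ : IsGenerator B d W₀)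
    (hG : IsGenerator B d G) (hAG : A ≤ G) (hWG : d ≤ finrank F ↥(W ⊓ G) + e)
    (hD : finrank F ↥(W ⊓ A) + e = finrank F A)
    (hWW₀ : d ≤ finrank F ↥(W ⊓ W₀) + 2 * e) (hsup : A ≤ (W ⊓ A) ⊔ (W₀ ⊓ A)) :
    d ≤ finrank F ↥(W₀ ⊓ G) + e := by
  have hperp : W ⊓ B.orthogonal A = W ⊓ G := by
    symm
    refine Submodule.eq_of_le_of_finrank_le
      (inf_le_inf_left _ fun x hx y hy => hG.2 y (hAG hy) x hx) ?_
    have h1 : W ⊓ B.orthogonal A ≤ B.orthogonal (W ⊔ A) := by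
      rintro x ⟨hxW, hxA⟩ y hy
      obtain ⟨a, ha, b, hb, rfl⟩ := Submodule.mem_sup.1 hy
      have : B b x = 0 := hxA b hb
      simp [hW.2 a ha x hxW, this]
    have h2 := Submodule.finrank_mono h1
    have h3 := finrank_add_finrank_orthogonal_eq hn hV (W ⊔ A)
    have h4 := Submodule.finrank_sup_add_finrank_inf_eq W A
    have := hW.1
    lia
  have hle : W ⊓ W₀ ≤ G := by
    have : W ⊓ W₀ ≤ W ⊓ B.orthogonal A := by
      refine le_inf inf_le_left ?_
      rintro x ⟨hxW, hxW₀⟩ y hy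
      obtain ⟨a, ha, b, hb, rfl⟩ := Submodule.mem_sup.1 (hsup hy)
      simp [hW.2 a ha.1 x hxW, hW₀.2 b hb.1 x hxW₀]
    exact (this.trans hperp.le).trans inf_le_right
  have h1 : (W ⊓ W₀) ⊔ (W₀ ⊓ A) ≤ W₀ ⊓ G :=
    sup_le (le_inf inf_le_right hle) (le_inf inf_le_left (inf_le_right.trans hAG))
  have h2 := Submodule.finrank_mono h1
  have h3 := Submodule.finrank_sup_add_finrank_inf_eq (W ⊓ W₀) (W₀ ⊓ A)
  have h4 : (W ⊓ W₀) ⊓ (W₀ ⊓ A) ≤ (W ⊓ A) ⊓ (W₀ ⊓ A) :=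
    fun x hx => ⟨⟨hx.1.1, hx.2.2⟩, hx.2⟩
  have h5 := Submodule.finrank_mono h4
  have h6 := Submodule.finrank_sup_add_finrank_inf_eq (W ⊓ A) (W₀ ⊓ A)
  have h7 := Submodule.finrank_mono hsup
  lia

end Symplectic

section Counting

open scoped Classical in
theorem card_filter_mem_submodule {F V : Type*} [Field F] [Fintype F] [AddCommGroup V] [Module F V]
    [Fintype V] (U : Submodule F V) : #{x : V | x ∈ U} = Fintype.card F ^ finrank F U := by
  rw [← Module.card_eq_pow_finrank (K := F) (V := U), Fintype.card_subtype]

open scoped Classical in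
theorem card_filter_mem_notMem {F V : Type*} [Field F] [Fintype F] [AddCommGroup V] [Module F V]
    [Fintype V] {U T : Submodule F V} (h : T ≤ U) :
    #{x : V | x ∈ U ∧ x ∉ T} = Fintype.card F ^ finrank F U - Fintype.card F ^ finrank F T := by
  rw [← card_filter_mem_submodule, ← card_filter_mem_submodule,
    ← Finset.card_sdiff_of_subset (fun x => by simpa using @h x)]
  congr 1
  ext x
  simp

variable {F V : Type*} [Field F] [Fintype F] [AddCommGroup V] [Module F V] [FiniteDimensional F V]
  {B : LinearMap.BilinForm F V} {d : ℕ}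

/-- The product `∏ (q ^ i + 1)` over `1 ≤ i ≤ c` counts the generators through a subspace of
codimension `c` in a generator. -/
theorem card_generators_through_le (hn : B.Nondegenerate) (hB : B.IsAlt)
    (hV : finrank F V = 2 * d) (c : ℕ) (D : Submodule F V)
    (hD : ∀ x ∈ D, ∀ y ∈ D, B x y = 0) (hDc : finrank F D + c = d)
    (S : Finset (Submodule F V)) (hS : ∀ W ∈ S, IsGenerator B d W ∧ D ≤ W) :
    #S ≤ ∏ i ∈ range c, (Fintype.card F ^ (i + 1) + 1) := by
  classical
  induction c generalizing D S with
  | zero =>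
    rw [prod_range_zero, card_le_one]
    have h : ∀ W ∈ S, D = W := fun W hW =>
      Submodule.eq_of_le_of_finrank_le (hS W hW).2 (by rw [(hS W hW).1.1]; lia)
    exact fun a ha b hb => (h a ha).symm.trans (h b hb)
  | succ c ih =>
    have : Finite V := Module.finite_of_finite F
    have : Fintype V := Fintype.ofFinite V
    set q := Fintype.card F with hq
    have hq1 : 1 < q := Fintype.one_lt_card
    have hDperp : D ≤ B.orthogonal D := fun x hx y hy => hD y hy x hx
    have hperp := finrank_add_finrank_orthogonal_eq hn hV D
    have key := card_mul_le_card_mul (s := S) (t := ({x : V | x ∈ B.orthogonal D ∧ x ∉ D}))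
      (fun W x => x ∈ W) (m := q ^ d - q ^ finrank F D)
      (n := ∏ i ∈ range c, (q ^ (i + 1) + 1)) ?_ ?_
    · rw [card_filter_mem_notMem hDperp, ← hq] at key
      have e1 : q ^ d - q ^ finrank F D = q ^ finrank F D * (q ^ (c + 1) - 1) := by
        rw [← hDc, pow_add, Nat.mul_sub, mul_one]
      have e2 : q ^ finrank F (B.orthogonal D) - q ^ finrank F D =
          q ^ finrank F D * ((q ^ (c + 1) - 1) * (q ^ (c + 1) + 1)) := by
        rw [show finrank F (B.orthogonal D) = finrank F D + ((c + 1) + (c + 1)) by lia, pow_add,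
          pow_add, mul_comm (q ^ (c + 1) - 1), ← Nat.mul_self_sub_mul_self_eq, Nat.mul_sub]
        simp
      rw [e1, e2] at key
      have hpos : 0 < q ^ finrank F D * (q ^ (c + 1) - 1) := by
        have := Nat.one_lt_pow (Nat.succ_ne_zero c) hq1
        exact Nat.mul_pos (by positivity) (by lia)
      rw [prod_range_succ]
      refine Nat.le_of_mul_le_mul_right (key.trans (le_of_eq ?_)) hpos
      ring
    · intro W hW
      obtain ⟨hWg, hDW⟩ := hS W hW
      rw [← hWg.1, hq, ← card_filter_mem_notMem hDW]
      refine card_le_card fun x hx => ?_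
      simp only [mem_filter, mem_univ, true_and, bipartiteAbove] at hx ⊢
      exact ⟨⟨fun y hy => hWg.2 y (hDW hy) x hx.1, hx.2⟩, hx.1⟩
    · intro x hx
      simp only [mem_filter, mem_univ, true_and] at hx
      refine ih (D ⊔ Submodule.span F {x}) (isotropic_sup_span_singleton hB hD hx.1) ?_ _ ?_
      · rw [finrank_sup_span_singleton_add_one hx.2]
        lia
      · intro W hW
        simp only [bipartiteBelow, mem_filter] at hW
        refine ⟨(hS W hW.1).1, sup_le (hS W hW.1).2 ?_⟩
        rw [Submodule.span_singleton_le_iff_mem]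
        exact hW.2

theorem prod_pow_add_one_le {q : ℕ} (hq : 3 ≤ q) (c : ℕ) :
    (∏ i ∈ range c, (q ^ (i + 1) + 1)) ≤ 2 * q ^ (∑ i ∈ range c, (i + 1)) := by
  suffices h : q ^ c * (∏ i ∈ range c, (q ^ (i + 1) + 1)) + q ^ (∑ i ∈ range c, (i + 1)) ≤
      q ^ c * (2 * q ^ (∑ i ∈ range c, (i + 1))) from
    Nat.le_of_mul_le_mul_left (le_of_add_le_left h) (by positivity)
  induction c with
  | zero => simp
  | succ c ih =>
    rw [prod_range_succ, sum_range_succ, pow_add q (∑ i ∈ range c, (i + 1))]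
    set P := ∏ i ∈ range c, (q ^ (i + 1) + 1)
    set Q := q ^ (∑ i ∈ range c, (i + 1))
    rw [pow_succ']
    set X := q ^ c with hX
    have hXpos : 0 < X := by positivity
    have h1 : X * (P * (q * X + 1) + Q) ≤ X * (2 * Q * (q * X)) := by
      have h2 := Nat.mul_le_mul_right (q * X + 1) ih
      have h3 := Nat.mul_le_mul_right (X * Q) hq
      nlinarith
    have h4 := Nat.mul_le_mul_left (q * X) (Nat.le_of_mul_le_mul_left h1 hXpos)
    nlinarith

/-- Passing to hyperplanes of `E` containing `D`. -/
theorem card_mul_le_of_hyperplanes (hn : B.Nondegenerate) (hB : B.IsAlt)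
    (hV : finrank F V = 2 * d) {D E : Submodule F V} (hDE : D ≤ E) {b j m M : ℕ}
    (hb : finrank F E = finrank F D + b) (S : Finset (Submodule F V))
    (hS : ∀ W ∈ S, ∃ U ≤ E, D ≤ U ∧ finrank F U + j ≤ finrank F E ∧ m ≤ finrank F ↥(W ⊓ U))
    (hM : ∀ E' ≤ E, finrank F E' + 1 = finrank F E →
      ∀ T ⊆ S, (∀ W ∈ T, m ≤ finrank F ↥(W ⊓ E')) → #T ≤ M) :
    #S * (Fintype.card F ^ j - 1) ≤ (Fintype.card F ^ b - 1) * M := by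
  classical
  have : Finite V := Module.finite_of_finite F
  have : Fintype V := Fintype.ofFinite V
  set q := Fintype.card F with hq
  have hq1 : 1 < q := Fintype.one_lt_card
  have hperpE := finrank_add_finrank_orthogonal_eq hn hV E
  have hperpD := finrank_add_finrank_orthogonal_eq hn hV D
  have hle : B.orthogonal E ≤ B.orthogonal D := LinearMap.BilinForm.orthogonal_le hDE
  set p := finrank F (B.orthogonal E) with hp
  have key := card_mul_le_card_mul (s := S)
    (t := ({v : V | v ∈ B.orthogonal D ∧ v ∉ B.orthogonal E}))
    (fun W v => m ≤ finrank F ↥(W ⊓ (E ⊓ LinearMap.ker (B v)))) (m := q ^ (p + j) - q ^ p)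
    (n := M) ?_ ?_
  · rw [card_filter_mem_notMem hle, ← hq, ← hp,
      show finrank F (B.orthogonal D) = p + b by lia] at key
    have e (k : ℕ) : q ^ (p + k) - q ^ p = q ^ p * (q ^ k - 1) := by
      rw [pow_add, Nat.mul_sub, mul_one]
    rw [e, e] at key
    refine Nat.le_of_mul_le_mul_left (?_ : q ^ p * _ ≤ q ^ p * _) (by positivity)
    calc _ = #S * (q ^ p * (q ^ j - 1)) := by ring
      _ ≤ _ := key
      _ = _ := by ring
  · intro W hW
    obtain ⟨U, hUE, hDU, hUj, hUm⟩ := hS W hW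
    have hperpU := finrank_add_finrank_orthogonal_eq hn hV U
    have hle' : B.orthogonal E ≤ B.orthogonal U := LinearMap.BilinForm.orthogonal_le hUE
    calc q ^ (p + j) - q ^ p ≤ q ^ finrank F (B.orthogonal U) - q ^ p :=
          Nat.sub_le_sub_right (Nat.pow_le_pow_right hq1.le (by lia)) _
      _ = _ := (card_filter_mem_notMem hle').symm
      _ ≤ _ := by
        refine card_le_card fun v hv => ?_
        simp only [mem_filter, mem_univ, true_and, bipartiteAbove] at hv ⊢
        refine ⟨⟨LinearMap.BilinForm.orthogonal_le hDU hv.1, hv.2⟩, hUm.trans ?_⟩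
        refine Submodule.finrank_mono (inf_le_inf_left _ (le_inf hUE fun x hx => ?_))
        exact (isAlt_eq_zero_comm hB).1 (hv.1 x hx)
  · intro v hv
    simp only [mem_filter, mem_univ, true_and] at hv
    refine hM (E ⊓ LinearMap.ker (B v)) inf_le_left ?_ _ (filter_subset _ _) fun W hW => ?_
    · refine finrank_inf_ker_add_one ?_
      by_contra! hcon
      exact hv.2 fun x hx => (isAlt_eq_zero_comm hB).1 (hcon x hx)
    · exact (mem_filter.1 hW).2

theorem card_generators_finrank_inf_ge_le (hq : 3 ≤ Fintype.card F) (hn : B.Nondegenerate)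
    (hB : B.IsAlt) (hV : finrank F V = 2 * d) {m c : ℕ} (hmc : m + c = d) (k : ℕ)
    (E : Submodule F V) (hE : ∀ x ∈ E, ∀ y ∈ E, B x y = 0) (hEk : finrank F E = m + k)
    (S : Finset (Submodule F V))
    (hS : ∀ W ∈ S, IsGenerator B d W ∧ m ≤ finrank F ↥(W ⊓ E)) :
    #S ≤ Fintype.card F ^ (k * (m + 1)) * (2 * Fintype.card F ^ (∑ i ∈ range c, (i + 1))) := by
  induction k generalizing E S with
  | zero =>
    rw [zero_mul, pow_zero, one_mul]
    refine (card_generators_through_le hn hB hV c E hE (by lia) S fun W hW => ?_).trans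
      (prod_pow_add_one_le hq c)
    refine ⟨(hS W hW).1, ?_⟩
    rw [← inf_eq_right]
    refine Submodule.eq_of_le_of_finrank_le inf_le_right ?_
    have := (hS W hW).2
    lia
  | succ k ih =>
    set q := Fintype.card F with hqdef
    set N := 2 * q ^ (∑ i ∈ range c, (i + 1)) with hN
    have key := card_mul_le_of_hyperplanes hn hB hV (bot_le : ⊥ ≤ E) (b := m + (k + 1))
      (j := k + 1) (m := m) (M := q ^ (k * (m + 1)) * N) (by simpa using hEk) S ?_ ?_
    · rw [← hqdef] at key
      have h1 : q ^ (m + (k + 1)) - 1 ≤ q ^ (m + 1) * (q ^ (k + 1) - 1) := by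
        have h2 : q ^ (m + 1) * 1 ≤ q ^ (m + 1) * q ^ k :=
          Nat.mul_le_mul_left _ (Nat.one_le_pow _ _ (by lia))
        have h3 : 3 * (q ^ (m + 1) * q ^ k) ≤ q * (q ^ (m + 1) * q ^ k) :=
          Nat.mul_le_mul_right _ hq
        have h4 : q ^ (m + (k + 1)) = q ^ (m + 1) * q ^ k := by ring
        have h5 : q ^ (m + 1) * q ^ (k + 1) = q * (q ^ (m + 1) * q ^ k) := by ring
        rw [Nat.mul_sub, h4, h5]
        lia
      have hpos : 0 < q ^ (k + 1) - 1 := by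
        have := Nat.one_lt_pow (Nat.succ_ne_zero k) (show 1 < q by lia)
        lia
      refine Nat.le_of_mul_le_mul_right (key.trans ((Nat.mul_le_mul_right _ h1).trans
        (le_of_eq ?_))) hpos
      ring
    · intro W hW
      obtain ⟨U, hU, hUm⟩ := exists_le_finrank_eq (W ⊓ E) (hS W hW).2
      refine ⟨U, hU.trans inf_le_right, bot_le, by lia, ?_⟩
      rw [inf_eq_right.2 (hU.trans inf_le_left), hUm]
    · intro E' hE' hE'f T hTS hT
      exact ih E' (fun x hx y hy => hE x (hE' hx) y (hE' hy)) (by lia) T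
        fun W hW => ⟨(hS W (hTS hW)).1, hT W hW⟩

end Counting

section Spheres

variable {F V : Type*} [Field F] [AddCommGroup V] [Module F V] {B : LinearMap.BilinForm F V}
  {d : ℕ}

/-- The projection of the generator `W` onto the generators through `v`. -/
def switch (B : LinearMap.BilinForm F V) (W : Submodule F V) (v : V) : Submodule F V :=
  (W ⊓ LinearMap.ker (B v)) ⊔ Submodule.span F {v}

theorem mem_switch (W : Submodule F V) (v : V) : v ∈ switch B W v :=
  Submodule.mem_sup_right (Submodule.mem_span_singleton_self v)

variable [FiniteDimensional F V]

theorem IsGenerator.switch (hn : B.Nondegenerate) (hB : B.IsAlt) (hV : finrank F V = 2 * d)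
    {W : Submodule F V} (hW : IsGenerator B d W) {v : V} (hv : v ∉ W) :
    IsGenerator B d (switch B W v) := by
  constructor
  · have h1 : ∃ x ∈ W, B v x ≠ 0 := by
      by_contra! hcon
      exact hv (hW.mem_of_forall hn hV fun x hx => (isAlt_eq_zero_comm hB).1 (hcon x hx))
    have h2 := finrank_inf_ker_add_one h1
    have h3 := finrank_sup_span_singleton_add_one (E := W ⊓ LinearMap.ker (B v)) (x := v)
      (fun h => hv h.1)
    have := hW.1
    unfold _root_.switch
    lia
  · exact isotropic_sup_span_singleton hB (fun x hx y hy => hW.2 x hx.1 y hy.1)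
      fun x hx => (isAlt_eq_zero_comm hB).1 hx.2

theorem switch_switch (hn : B.Nondegenerate) (hB : B.IsAlt) (hV : finrank F V = 2 * d)
    {W : Submodule F V} (hW : IsGenerator B d W) {v g : V} (hg : g ∈ W) (hvg : B v g ≠ 0) :
    switch B (switch B W v) g = W := by
  have hv : v ∉ W := fun h => hvg (hW.2 v h g hg)
  have hgv : B g v ≠ 0 := fun h => hvg ((isAlt_eq_zero_comm hB).1 h)
  have hW' := hW.switch hn hB hV hv
  have hg' : g ∉ switch B W v := fun h => hvg (hW'.2 v (mem_switch W v) g h)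
  have hW'' := hW'.switch hn hB hV hg'
  refine Submodule.eq_of_le_of_finrank_le (sup_le ?_ ?_) (by rw [hW.1, hW''.1])
  · rintro x ⟨hx, hgx⟩
    obtain ⟨a, ha, b, hb, rfl⟩ := Submodule.mem_sup.1 hx
    obtain ⟨r, rfl⟩ := Submodule.mem_span_singleton.1 hb
    have : r = 0 := by simpa [hW.2 g hg a ha.1, hgv] using hgx
    simpa [this] using ha.1
  · rwa [Submodule.span_singleton_le_iff_mem]

theorem finrank_switch_inf_of_mem (hn : B.Nondegenerate) (hB : B.IsAlt)
    (hV : finrank F V = 2 * d) {W G : Submodule F V} (hW : IsGenerator B d W)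
    (hG : IsGenerator B d G) {v g : V} (hgW : g ∈ W) (hgG : g ∈ G) (hvg : B v g ≠ 0) :
    finrank F ↥(switch B W v ⊓ G) + 1 = finrank F ↥(W ⊓ G) := by
  have h1 : switch B W v ⊓ G = (W ⊓ G) ⊓ LinearMap.ker (B v) := by
    apply le_antisymm
    · have hv : v ∉ W := fun h => hvg (hW.2 v h g hgW)
      have hW' := hW.switch hn hB hV hv
      rintro x ⟨hx, hxG⟩
      have hgv : B g v ≠ 0 := fun h => hvg ((isAlt_eq_zero_comm hB).1 h)
      refine ⟨⟨?_, hxG⟩, hW'.2 v (mem_switch W v) x hx⟩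
      obtain ⟨a, ha, b, hb, rfl⟩ := Submodule.mem_sup.1 hx
      obtain ⟨r, rfl⟩ := Submodule.mem_span_singleton.1 hb
      have : r = 0 := by
        have h := hG.2 g hgG _ hxG
        simpa [hW.2 g hgW a ha.1, hgv] using h
      simpa [this] using ha.1
    · rintro x ⟨⟨hxW, hxG⟩, hx⟩
      exact ⟨Submodule.mem_sup_left ⟨hxW, hx⟩, hxG⟩
  rw [h1]
  exact finrank_inf_ker_add_one ⟨g, ⟨hgW, hgG⟩, hvg⟩

open scoped Classical in
theorem card_sphere_zero [Fintype (Submodule F V)] {G : Submodule F V} (hG : IsGenerator B d G) :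
    #{W : Submodule F V | IsGenerator B d W ∧ finrank F ↥(W ⊓ G) + 0 = d} = 1 := by
  rw [card_eq_one]
  refine ⟨G, ?_⟩
  ext W
  simp only [mem_filter, mem_univ, true_and, mem_singleton, add_zero]
  constructor
  · rintro ⟨hW, h⟩
    have h1 : W ⊓ G = W := Submodule.eq_of_le_of_finrank_eq inf_le_left (h.trans hW.1.symm)
    have h2 : W ⊓ G = G := Submodule.eq_of_le_of_finrank_eq inf_le_right (h.trans hG.1.symm)
    exact h1.symm.trans h2
  · rintro rfl
    rw [inf_idem]
    exact ⟨hG, hG.1⟩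

variable [Fintype F]

open scoped Classical in
theorem card_pairs_ne_zero [Fintype V] (hB : B.IsAlt) (X Y : Submodule F V) {x : ℕ}
    (hX : finrank F X = x + 1) :
    #{p : V × V | p.1 ∈ X ∧ p.2 ∈ Y ∧ B p.1 p.2 ≠ 0} =
      (Fintype.card F ^ finrank F Y - Fintype.card F ^ finrank F ↥(Y ⊓ B.orthogonal X)) *
        (Fintype.card F ^ (x + 1) - Fintype.card F ^ x) := by
  rw [← card_filter_mem_notMem inf_le_left]
  rw [card_eq_sum_card_fiberwise (f := Prod.snd)
    (t := ({y : V | y ∈ Y ∧ y ∉ Y ⊓ B.orthogonal X} : Finset V))]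
  · refine sum_const_nat fun y hy => ?_
    simp only [mem_filter, mem_univ, true_and] at hy
    have hex : ∃ z ∈ X, B y z ≠ 0 := by
      by_contra! hcon
      exact hy.2 ⟨hy.1, fun z hz => (isAlt_eq_zero_comm hB).1 (hcon z hz)⟩
    have hrank := finrank_inf_ker_add_one hex
    have hcard := card_filter_mem_notMem (F := F) (V := V) (U := X)
      (T := X ⊓ LinearMap.ker (B y)) inf_le_left
    rw [hX, show finrank F ↥(X ⊓ LinearMap.ker (B y)) = x by lia] at hcard
    rw [← hcard]
    refine card_nbij' Prod.fst (fun z => (z, y)) ?_ ?_ ?_ ?_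
    · rintro ⟨z, w⟩ hz
      simp only [coe_filter, mem_filter, mem_univ, true_and, Set.mem_ofPred_eq] at hz ⊢
      obtain ⟨⟨hzX, -, hzw⟩, rfl⟩ := hz
      exact ⟨hzX, fun h => hzw ((isAlt_eq_zero_comm hB).1 h.2)⟩
    · intro z hz
      simp only [coe_filter, mem_filter, mem_univ, true_and, Set.mem_ofPred_eq] at hz ⊢
      exact ⟨⟨hz.1, hy.1, fun h => hz.2 ⟨hz.1, (isAlt_eq_zero_comm hB).1 h⟩⟩, trivial⟩
    · rintro ⟨z, w⟩ hz
      simp only [coe_filter, mem_filter, mem_univ, true_and, Set.mem_ofPred_eq] at hz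
      rw [hz.2]
    · intro z _
      rfl
  · intro p hp
    simp only [coe_filter, mem_univ, true_and, Set.mem_ofPred_eq] at hp ⊢
    exact ⟨hp.2.1, fun h => hp.2.2 (h.2 p.1 hp.1)⟩

open scoped Classical in
theorem card_sphere_succ [Fintype (Submodule F V)] (hn : B.Nondegenerate) (hB : B.IsAlt)
    (hV : finrank F V = 2 * d) {G : Submodule F V} (hG : IsGenerator B d G) {i : ℕ} (hi : i < d) :
    #{W : Submodule F V | IsGenerator B d W ∧ finrank F ↥(W ⊓ G) + (i + 1) = d} *
        (Fintype.card F ^ (i + 1) - 1) =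
      #{W : Submodule F V | IsGenerator B d W ∧ finrank F ↥(W ⊓ G) + i = d} *
        (Fintype.card F ^ (i + 1) * (Fintype.card F ^ (d - i) - 1)) := by
  have : Finite V := Module.finite_of_finite F
  have : Fintype V := Fintype.ofFinite V
  set q := Fintype.card F with hq
  have hq1 : 1 < q := Fintype.one_lt_card
  set S : Finset (Submodule F V) := {W | IsGenerator B d W ∧ finrank F ↥(W ⊓ G) + i = d} with hS
  set T : Finset (Submodule F V) :=
    {W | IsGenerator B d W ∧ finrank F ↥(W ⊓ G) + (i + 1) = d} with hT
  set Q : Finset (V × V) := {p | p.2 ∈ G ∧ B p.1 p.2 ≠ 0} with hQ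
  obtain ⟨d, rfl⟩ : ∃ n, d = n + 1 := ⟨d - 1, by lia⟩
  have hfib : ∀ p ∈ Q, #{W ∈ S | p.2 ∈ W} = #{W ∈ T | p.1 ∈ W} := by
    rintro ⟨v, g⟩ hp
    simp only [hQ, mem_filter, mem_univ, true_and] at hp
    obtain ⟨hg, hvg⟩ := hp
    have hgv : B g v ≠ 0 := fun h => hvg ((isAlt_eq_zero_comm hB).1 h)
    refine card_nbij' (fun W => switch B W v) (fun W => switch B W g) ?_ ?_ ?_ ?_
    · intro W hW
      simp only [hS, hT, coe_filter, mem_filter, mem_univ, true_and, Set.mem_ofPred_eq] at hW ⊢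
      obtain ⟨⟨hW, hWi⟩, hgW⟩ := hW
      have := finrank_switch_inf_of_mem hn hB hV hW hG hgW hg hvg
      exact ⟨⟨hW.switch hn hB hV fun h => hvg (hW.2 v h g hgW), by lia⟩, mem_switch W v⟩
    · intro W hW
      simp only [hS, hT, coe_filter, mem_filter, mem_univ, true_and, Set.mem_ofPred_eq] at hW ⊢
      obtain ⟨⟨hW, hWi⟩, hvW⟩ := hW
      have hW' := hW.switch hn hB hV fun h => hvg (hW.2 v hvW g h)
      have := finrank_switch_inf_of_mem hn hB hV hW' hG (mem_switch W g) hg hvg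
      rw [switch_switch hn hB hV hW hvW hgv] at this
      exact ⟨⟨hW', by lia⟩, mem_switch W g⟩
    · intro W hW
      simp only [hS, coe_filter, mem_filter, mem_univ, true_and, Set.mem_ofPred_eq] at hW
      exact switch_switch hn hB hV hW.1.1 hW.2 hvg
    · intro W hW
      simp only [hT, coe_filter, mem_filter, mem_univ, true_and, Set.mem_ofPred_eq] at hW
      exact switch_switch hn hB hV hW.1.1 hW.2 hgv
  have h1 := sum_card_bipartiteAbove_eq_sum_card_bipartiteBelow (s := S) (t := Q)
    (fun W p => p.2 ∈ W)
  have h2 := sum_card_bipartiteAbove_eq_sum_card_bipartiteBelow (s := T) (t := Q)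
    (fun W p => p.1 ∈ W)
  have h3 : ∑ p ∈ Q, #(S.bipartiteBelow (fun W p => p.2 ∈ W) p) =
      ∑ p ∈ Q, #(T.bipartiteBelow (fun W p => p.1 ∈ W) p) := sum_congr rfl hfib
  have h4 : ∀ W ∈ S, #(Q.bipartiteAbove (fun W p => p.2 ∈ W) W) =
      (q ^ (d + 1 - i) - 1) * (q ^ (2 * d + 2) - q ^ (2 * d + 1)) := by
    intro W hW
    simp only [hS, mem_filter, mem_univ, true_and] at hW
    have hbot : (W ⊓ G) ⊓ B.orthogonal ⊤ = ⊥ := by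
      rw [eq_bot_iff]
      rintro x ⟨-, hx⟩
      exact hn.2 x fun y => hx y trivial
    have := card_pairs_ne_zero hB ⊤ (W ⊓ G) (x := 2 * d + 1) (by rw [finrank_top, hV]; ring)
    rw [hbot, finrank_bot, pow_zero, show finrank F ↥(W ⊓ G) = d + 1 - i by lia] at this
    rw [hq, ← this]
    congr 1
    ext p
    simp only [hQ, bipartiteAbove, mem_filter, mem_univ, true_and, Submodule.mem_top,
      Submodule.mem_inf]
    tauto
  have h5 : ∀ W ∈ T, #(Q.bipartiteAbove (fun W p => p.1 ∈ W) W) =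
      (q ^ (d + 1) - q ^ (d - i)) * (q ^ (d + 1) - q ^ d) := by
    intro W hW
    simp only [hT, mem_filter, mem_univ, true_and] at hW
    have := card_pairs_ne_zero hB W G (x := d) hW.1.1
    rw [hW.1.orthogonal_eq hn hV, hG.1, inf_comm,
      show finrank F ↥(W ⊓ G) = d - i by lia] at this
    rw [hq, ← this]
    congr 1
    ext p
    simp only [hQ, bipartiteAbove, mem_filter, mem_univ, true_and]
    tauto
  rw [sum_const_nat h4] at h1
  rw [sum_const_nat h5] at h2
  have h6 := h1.trans (h3.trans h2.symm)
  obtain ⟨r, rfl⟩ : ∃ r, d = i + r := ⟨d - i, by lia⟩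
  rw [show i + r - i = r by lia] at h6
  have e1 : q ^ (2 * (i + r) + 2) - q ^ (2 * (i + r) + 1) =
      q ^ r * q ^ (i + r) * (q - 1) * q ^ (i + 1) := by
    rw [Nat.mul_sub, Nat.sub_mul]
    congr 1 <;> ring
  have e2 : q ^ (i + r + 1) - q ^ r = q ^ r * (q ^ (i + 1) - 1) := by
    rw [Nat.mul_sub]
    congr 1 <;> ring
  have e3 : q ^ (i + r + 1) - q ^ (i + r) = q ^ (i + r) * (q - 1) := by
    rw [Nat.mul_sub]
    congr 1; ring
  rw [e1, e2, e3] at h6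
  have hpos : 0 < q ^ r * q ^ (i + r) * (q - 1) := Nat.mul_pos (by positivity) (by lia)
  refine Nat.eq_of_mul_eq_mul_left hpos ?_
  linear_combination -h6

open scoped Classical in
theorem card_sphere_eq [Fintype (Submodule F V)] (hn : B.Nondegenerate) (hB : B.IsAlt)
    (hV : finrank F V = 2 * d) {G G' : Submodule F V} (hG : IsGenerator B d G)
    (hG' : IsGenerator B d G') {i : ℕ} (hi : i ≤ d) :
    #{W : Submodule F V | IsGenerator B d W ∧ finrank F ↥(W ⊓ G) + i = d} =
      #{W : Submodule F V | IsGenerator B d W ∧ finrank F ↥(W ⊓ G') + i = d} := by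
  induction i with
  | zero => rw [card_sphere_zero hG, card_sphere_zero hG']
  | succ i ih =>
    have h := card_sphere_succ hn hB hV hG hi
    rw [ih (by lia), ← card_sphere_succ hn hB hV hG' hi] at h
    refine Nat.eq_of_mul_eq_mul_right ?_ h
    have := Nat.one_lt_pow (Nat.succ_ne_zero i) (Fintype.one_lt_card (α := F))
    lia

open scoped Classical in
theorem pow_le_card_sphere [Fintype (Submodule F V)] (hn : B.Nondegenerate) (hB : B.IsAlt)
    (hV : finrank F V = 2 * d) {G : Submodule F V} (hG : IsGenerator B d G) {i : ℕ}
    (hi : 2 * i ≤ d) :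
    Fintype.card F ^ (∑ j ∈ range i, (d - j)) ≤
      #{W : Submodule F V | IsGenerator B d W ∧ finrank F ↥(W ⊓ G) + i = d} := by
  induction i with
  | zero => rw [card_sphere_zero hG]; simp
  | succ i ih =>
    have h := card_sphere_succ hn hB hV hG (i := i) (by lia)
    have ih := ih (by lia)
    set q := Fintype.card F
    have hq1 : 1 < q := Fintype.one_lt_card
    have h1 : q ^ (d - i) * (q ^ (i + 1) - 1) ≤ q ^ (i + 1) * (q ^ (d - i) - 1) := by
      have : q ^ (i + 1) ≤ q ^ (d - i) := Nat.pow_le_pow_right hq1.le (by lia)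
      rw [Nat.mul_sub, Nat.mul_sub, mul_comm (q ^ (i + 1))]
      lia
    have hpos : 0 < q ^ (i + 1) - 1 := by
      have := Nat.one_lt_pow (Nat.succ_ne_zero i) hq1
      lia
    refine Nat.le_of_mul_le_mul_right ?_ hpos
    rw [h, sum_range_succ, pow_add, mul_assoc]
    exact Nat.mul_le_mul ih h1

open scoped Classical in
theorem card_ball_eq [Fintype (Submodule F V)] (hn : B.Nondegenerate) (hB : B.IsAlt)
    (hV : finrank F V = 2 * d) {G G' : Submodule F V} (hG : IsGenerator B d G)
    (hG' : IsGenerator B d G') {e : ℕ} (he : e ≤ d) :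
    #{W : Submodule F V | IsGenerator B d W ∧ d ≤ finrank F ↥(W ⊓ G) + e} =
      #{W : Submodule F V | IsGenerator B d W ∧ d ≤ finrank F ↥(W ⊓ G') + e} := by
  have hsum : ∀ {G : Submodule F V}, IsGenerator B d G →
      #{W : Submodule F V | IsGenerator B d W ∧ d ≤ finrank F ↥(W ⊓ G) + e} =
        ∑ i ∈ range (e + 1),
          #{W : Submodule F V | IsGenerator B d W ∧ finrank F ↥(W ⊓ G) + i = d} := by
    intro G hG
    have hle (W : Submodule F V) : finrank F ↥(W ⊓ G) ≤ d :=
      (Submodule.finrank_mono inf_le_right).trans hG.1.le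
    rw [card_eq_sum_card_fiberwise (f := fun W => d - finrank F ↥(W ⊓ G)) (t := range (e + 1))]
    · refine sum_congr rfl fun i hi => ?_
      congr 1
      ext W
      have := hle W
      simp only [mem_filter, mem_univ, true_and, mem_range] at hi ⊢
      constructor
      · rintro ⟨⟨hW, h⟩, h'⟩
        exact ⟨hW, by lia⟩
      · rintro ⟨hW, h⟩
        exact ⟨⟨hW, by lia⟩, by lia⟩
    · intro W hW
      simp only [coe_filter, mem_univ, true_and, Set.mem_ofPred_eq, coe_range, Set.mem_Iio] at hW ⊢
      lia
  rw [hsum hG, hsum hG']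
  refine sum_congr rfl fun i hi => card_sphere_eq hn hB hV hG hG' ?_
  have := mem_range.1 hi
  lia

end Spheres

section EKR

variable {F V : Type*} [Field F] [Fintype F] [AddCommGroup V] [Module F V] [FiniteDimensional F V]
  {B : LinearMap.BilinForm F V} {d : ℕ}

/-- Generators meeting `A` in codimension `e + 1` but not spanning `A` together with `D`. -/
theorem card_not_sup_le (hq : 3 ≤ Fintype.card F) (hn : B.Nondegenerate)
    (hB : B.IsAlt) (hV : finrank F V = 2 * d) {m e : ℕ} (hm : m + 3 * (e + 1) = d)
    {A D : Submodule F V} (hA : ∀ x ∈ A, ∀ y ∈ A, B x y = 0) (hAm : finrank F A = m + (e + 1))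
    (hDA : D ≤ A) (hD : m ≤ finrank F D) (S : Finset (Submodule F V))
    (hS : ∀ W ∈ S, IsGenerator B d W ∧ m ≤ finrank F ↥(W ⊓ A) ∧ ¬ A ≤ (W ⊓ A) ⊔ D) :
    #S ≤ Fintype.card F ^ (e + 1) * (Fintype.card F ^ (e * (m + 1)) *
      (2 * Fintype.card F ^ (∑ i ∈ range (3 * (e + 1)), (i + 1)))) := by
  set q := Fintype.card F with hqdef
  set M := q ^ (e * (m + 1)) * (2 * q ^ (∑ i ∈ range (3 * (e + 1)), (i + 1))) with hM
  obtain ⟨b, hb⟩ : ∃ b, finrank F A = finrank F D + b :=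
    ⟨finrank F A - finrank F D, by have := Submodule.finrank_mono hDA; lia⟩
  have key := card_mul_le_of_hyperplanes hn hB hV hDA (j := 1) (m := m) (M := M) hb S ?_ ?_
  · rw [← hqdef] at key
    have h1 : q ^ b - 1 ≤ q ^ (e + 1) :=
      (Nat.sub_le _ _).trans (Nat.pow_le_pow_right (by lia) (by lia))
    calc #S ≤ #S * (q ^ 1 - 1) := Nat.le_mul_of_pos_right _ (by rw [pow_one]; lia)
      _ ≤ _ := key
      _ ≤ _ := Nat.mul_le_mul_right _ h1
  · intro W hW
    obtain ⟨-, hWm, hWs⟩ := hS W hW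
    have hle : (W ⊓ A) ⊔ D ≤ A := sup_le inf_le_right hDA
    refine ⟨_, hle, le_sup_right, ?_, hWm.trans (Submodule.finrank_mono ?_)⟩
    · exact Submodule.finrank_lt_finrank_of_lt (lt_of_le_not_ge hle hWs)
    · exact le_inf inf_le_left le_sup_left
  · intro E hE hEf T hTS hT
    exact card_generators_finrank_inf_ge_le hq hn hB hV hm e E
      (fun x hx y hy => hA x (hE hx) y (hE hy)) (by lia) T
      fun W hW => ⟨(hS W (hTS hW)).1, hT W hW⟩

theorem exists_ball_or_card_le (hq : 3 ≤ Fintype.card F) (hn : B.Nondegenerate)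
    (hB : B.IsAlt) (hV : finrank F V = 2 * d) {m e : ℕ} (hm : m + 3 * (e + 1) = d)
    (Z : Finset (Submodule F V)) (hZ : ∀ W ∈ Z, IsGenerator B d W)
    (hZe : ∀ W ∈ Z, ∀ W' ∈ Z, d ≤ finrank F ↥(W ⊓ W') + 2 * (e + 1)) :
    (∃ G, IsGenerator B d G ∧ ∀ W ∈ Z, d ≤ finrank F ↥(W ⊓ G) + (e + 1)) ∨
      #Z ≤ 3 * (Fintype.card F ^ (e + 1) * (Fintype.card F ^ (e * (m + 1)) *
        (2 * Fintype.card F ^ (∑ i ∈ range (3 * (e + 1)), (i + 1))))) := by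
  classical
  set q := Fintype.card F with hqdef
  set N := q ^ (e + 1) * (q ^ (e * (m + 1)) * (2 * q ^ (∑ i ∈ range (3 * (e + 1)), (i + 1))))
    with hN
  have hfew : ∀ A : Submodule F V, (∀ x ∈ A, ∀ y ∈ A, B x y = 0) → finrank F A = m + (e + 1) →
      ∀ S ⊆ Z, (∀ W ∈ S, m + 1 ≤ finrank F ↥(W ⊓ A)) → #S ≤ N := by
    intro A hA hAm S hSZ hS
    have h := card_generators_finrank_inf_ge_le hq hn hB hV (m := m + 1) (c := 3 * e + 2)
      (by lia) e A hA (by lia) S fun W hW => ⟨hZ W (hSZ hW), hS W hW⟩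
    refine h.trans ?_
    rw [hN, ← mul_assoc (q ^ (e + 1)), ← pow_add]
    have hq0 : 0 < q := by lia
    refine Nat.mul_le_mul (Nat.pow_le_pow_right hq0 ?_)
      (Nat.mul_le_mul_left _ (Nat.pow_le_pow_right hq0 ?_))
    · lia
    · rw [show 3 * (e + 1) = 3 * e + 2 + 1 by ring, sum_range_succ _ (3 * e + 2)]
      exact Nat.le_add_right _ _
  rcases Z.eq_empty_or_nonempty with rfl | hne
  · exact Or.inr (by simp)
  obtain ⟨⟨W₁, W₂⟩, hmem, hmin⟩ := exists_min_image (Z ×ˢ Z)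
    (fun p => finrank F ↥(p.1 ⊓ p.2)) (hne.product hne)
  obtain ⟨hW₁, hW₂⟩ := mem_product.1 hmem
  simp only at hW₁ hW₂
  have hmin : ∀ W ∈ Z, ∀ W' ∈ Z, finrank F ↥(W₁ ⊓ W₂) ≤ finrank F ↥(W ⊓ W') :=
    fun W hW W' hW' => hmin (W, W') (mem_product.2 ⟨hW, hW'⟩)
  have h12 := hZe W₁ hW₁ W₂ hW₂
  have hAiso : ∀ x ∈ W₁ ⊓ W₂, ∀ y ∈ W₁ ⊓ W₂, B x y = 0 :=
    fun x hx y hy => (hZ W₁ hW₁).2 x hx.1 y hy.1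
  have hsum : ∀ W ∈ Z, finrank F ↥(W ⊓ W₁) + finrank F ↥(W ⊓ W₂) + finrank F ↥(W₁ ⊓ W₂) ≤
      d + 2 * finrank F ↥(W ⊓ (W₁ ⊓ W₂)) := by
    intro W hW
    have h1 := finrank_sup_inf_inf (W := W) (W₁ := W₁) (W₂ := W₂)
    have h2 := finrank_le_of_isotropic hn hV
      (isotropic_sup_inf_inf hB (hZ W hW) (hZ W₁ hW₁) (hZ W₂ hW₂))
    lia
  have hle3 : N ≤ 3 * N := Nat.le_mul_of_pos_left _ (by norm_num)
  rcases Nat.lt_or_ge d (finrank F ↥(W₁ ⊓ W₂) + 2 * (e + 1)) with hlt | hge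
  · right
    obtain ⟨A, hA, hAm⟩ := exists_le_finrank_eq (W₁ ⊓ W₂) (m := m + (e + 1)) (by lia)
    refine (hfew A (fun x hx y hy => hAiso x (hA hx) y (hA hy)) hAm Z subset_rfl
      fun W hW => ?_).trans hle3
    have h1 := hsum W hW
    have h2 := hmin W hW W₁ hW₁
    have h3 := hmin W hW W₂ hW₂
    have h4 := Submodule.finrank_sup_add_finrank_inf_eq (W ⊓ (W₁ ⊓ W₂)) A
    have h5 : (W ⊓ (W₁ ⊓ W₂)) ⊓ A = W ⊓ A := by rw [inf_assoc, inf_eq_right.2 hA]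
    have h6 := Submodule.finrank_mono (sup_le inf_le_right hA : (W ⊓ (W₁ ⊓ W₂)) ⊔ A ≤ W₁ ⊓ W₂)
    rw [h5] at h4
    lia
  set A := W₁ ⊓ W₂ with hAdef
  clear_value A
  have hAm : finrank F A = m + (e + 1) := by lia
  have hDm : ∀ W ∈ Z, m ≤ finrank F ↥(W ⊓ A) := by
    intro W hW
    have h1 := hsum W hW
    have h2 := hmin W hW W₁ hW₁
    have h3 := hmin W hW W₂ hW₂
    lia
  by_cases hex : ∃ W ∈ Z, finrank F ↥(W ⊓ A) = m
  swap
  · refine Or.inr ((hfew A hAiso hAm Z subset_rfl fun W hW => ?_).trans hle3)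
    exact Nat.lt_of_le_of_ne (hDm W hW) fun h => hex ⟨W, hW, h.symm⟩
  obtain ⟨W', hW', hW'm⟩ := hex
  obtain ⟨G, hG, hAG, hW'G⟩ := exists_center hn hB hV (e := e + 1) (hZ W' hW') (hZ W₁ hW₁)
    (hZ W₂ hW₂) (hZe W' hW' W₁ hW₁) (hZe W' hW' W₂ hW₂) (by rw [← hAdef]; lia)
    (by rw [← hAdef]; lia)
  rw [← hAdef] at hAG
  by_cases hball : ∀ W ∈ Z, d ≤ finrank F ↥(W ⊓ G) + (e + 1)
  · exact Or.inl ⟨G, hG, hball⟩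
  push Not at hball
  obtain ⟨W₀, hW₀, hW₀G⟩ := hball
  right
  have hcover : Z ⊆ {W ∈ Z | m + 1 ≤ finrank F ↥(W ⊓ A)} ∪
      ({W ∈ Z | ¬ A ≤ (W ⊓ A) ⊔ (W' ⊓ A)} ∪ {W ∈ Z | ¬ A ≤ (W ⊓ A) ⊔ (W₀ ⊓ A)}) := by
    intro W hW
    simp only [mem_union, mem_filter, hW, true_and]
    by_contra! hcon
    obtain ⟨h1, h2, h3⟩ := hcon
    have hWm : finrank F ↥(W ⊓ A) = m := by have := hDm W hW; lia
    have hWG := mem_ball_of_sup_eq hn hV (hZ W' hW') (hZ W hW) hG hAG hW'G (by lia)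
      (hZe W' hW' W hW) (sup_comm (W ⊓ A) (W' ⊓ A) ▸ h2)
    have := mem_ball_of_sup_eq hn hV (hZ W hW) (hZ W₀ hW₀) hG hAG hWG (by lia)
      (hZe W hW W₀ hW₀) h3
    lia
  have h1 := hfew A hAiso hAm {W ∈ Z | m + 1 ≤ finrank F ↥(W ⊓ A)} (filter_subset _ _)
    fun W hW => (mem_filter.1 hW).2
  have h2 : ∀ U ∈ Z, #{W ∈ Z | ¬ A ≤ (W ⊓ A) ⊔ (U ⊓ A)} ≤ N := fun U hU =>
    card_not_sup_le hq hn hB hV hm hAiso hAm inf_le_right (hDm U hU) _ fun W hW =>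
      ⟨hZ W (mem_filter.1 hW).1, hDm W (mem_filter.1 hW).1, (mem_filter.1 hW).2⟩
  have h3 := h2 W' hW'
  have h4 := h2 W₀ hW₀
  have h5 := (card_le_card hcover).trans
    ((card_union_le _ _).trans (Nat.add_le_add_left (card_union_le _ _) _))
  lia

theorem three_mul_lt_pow {q d m e : ℕ} (hq : 3 ≤ q) (hm : m + 3 * (e + 1) = d)
    (hd : 5 * (e + 2) ^ 2 ≤ 2 * d) :
    3 * (q ^ (e + 1) * (q ^ (e * (m + 1)) * (2 * q ^ (∑ i ∈ range (3 * (e + 1)), (i + 1))))) <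
      q ^ (∑ j ∈ range (e + 1), (d - j)) := by
  have h1 (n : ℕ) : 2 * ∑ i ∈ range n, (i + 1) = n * (n + 1) := by
    induction n with
    | zero => rfl
    | succ n ih => rw [sum_range_succ, mul_add, ih]; ring
  have h2 (n : ℕ) (hn : n ≤ d + 1) : 2 * ∑ j ∈ range n, (d - j) + n * n = n * (2 * d + 1) := by
    induction n with
    | zero => simp
    | succ n ih =>
      have := ih (by lia)
      obtain ⟨r, rfl⟩ : ∃ r, d = n + r := ⟨d - n, by lia⟩
      rw [sum_range_succ, show n + r - n = r by lia]
      nlinarith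
  have h3 := h1 (3 * (e + 1))
  have h4 := h2 (e + 1) (by lia)
  set a := ∑ i ∈ range (3 * (e + 1)), (i + 1)
  set L := ∑ j ∈ range (e + 1), (d - j)
  have hle : 2 + (e + 1) + e * (m + 1) + a < L := by
    subst hm
    nlinarith
  calc 3 * (q ^ (e + 1) * (q ^ (e * (m + 1)) * (2 * q ^ a)))
      ≤ q * (q ^ (e + 1) * (q ^ (e * (m + 1)) * (q * q ^ a))) := by gcongr; lia
    _ = q ^ (2 + (e + 1) + e * (m + 1) + a) := by ring
    _ < q ^ L := Nat.pow_lt_pow_right (by lia) hle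

/-- A family of diameter at most `2 * e` lies in a ball of radius `e` or is smaller than every
such ball. -/
theorem exists_ball_or_card_lt [Fintype (Submodule F V)] (hq : 3 ≤ Fintype.card F)
    (hn : B.Nondegenerate) (hB : B.IsAlt) (hV : finrank F V = 2 * d) {e : ℕ}
    (hd : 5 * (e + 1) ^ 2 ≤ 2 * d) (Z : Finset (Submodule F V))
    (hZ : ∀ W ∈ Z, IsGenerator B d W)
    (hZe : ∀ W ∈ Z, ∀ W' ∈ Z, d ≤ finrank F ↥(W ⊓ W') + 2 * e) :
    (∃ G, IsGenerator B d G ∧ ∀ W ∈ Z, d ≤ finrank F ↥(W ⊓ G) + e) ∨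
      ∀ G, IsGenerator B d G → ∀ S : Finset (Submodule F V),
        (∀ W, IsGenerator B d W → d ≤ finrank F ↥(W ⊓ G) + e → W ∈ S) → #Z < #S := by
  classical
  rcases e with _ | e
  · left
    rcases Z.eq_empty_or_nonempty with rfl | ⟨W₁, hW₁⟩
    · obtain ⟨G, hG⟩ := exists_isGenerator hn hB hV
      exact ⟨G, hG, by simp⟩
    · exact ⟨W₁, hZ W₁ hW₁, fun W hW => hZe W hW W₁ hW₁⟩
  · have hbig : 3 * (e + 1) ≤ d := by nlinarith
    obtain ⟨m, hm⟩ : ∃ m, m + 3 * (e + 1) = d := ⟨d - 3 * (e + 1), by lia⟩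
    refine (exists_ball_or_card_le hq hn hB hV hm Z hZ hZe).imp_right fun h G hG S hS => ?_
    refine (h.trans_lt (three_mul_lt_pow hq hm hd)).trans_le
      ((pow_le_card_sphere hn hB hV hG (by lia)).trans (card_le_card fun W hW => ?_))
    simp only [mem_filter, mem_univ, true_and] at hW
    exact hS W hW.1 (by lia)

end EKR

theorem stmt18 (F : Type*) [Field F] [Fintype F] (hq : 3 ≤ Fintype.card F)
    (V : Type*) [AddCommGroup V] [Module F V] [FiniteDimensional F V]
    (d t : ℕ) (hV : Module.finrank F V = 2 * d)
    (B : LinearMap.BilinForm F V) (hBnd : B.Nondegenerate)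
    (hBalt : ∀ x : V, B x x = 0)
    (ht : Even t) (htd : 5 * (t + 2) ^ 2 ≤ 8 * d)
    (Y : Set (Submodule F V))
    (hYgen : ∀ W ∈ Y, Module.finrank F W = d ∧ ∀ x ∈ W, ∀ y ∈ W, B x y = 0)
    (hYekr : ∀ W₁ ∈ Y, ∀ W₂ ∈ Y, d - t ≤ Module.finrank F ↥(W₁ ⊓ W₂)) :
    (∀ Z : Set (Submodule F V),
        (∀ W ∈ Z, Module.finrank F W = d ∧ ∀ x ∈ W, ∀ y ∈ W, B x y = 0) →
        (∀ W₁ ∈ Z, ∀ W₂ ∈ Z, d - t ≤ Module.finrank F ↥(W₁ ⊓ W₂)) →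
        Z.ncard ≤ Y.ncard)
      ↔ ∃ G : Submodule F V,
          (Module.finrank F G = d ∧ ∀ x ∈ G, ∀ y ∈ G, B x y = 0) ∧
          Y = {W : Submodule F V |
                (Module.finrank F W = d ∧ ∀ x ∈ W, ∀ y ∈ W, B x y = 0) ∧
                d - t / 2 ≤ Module.finrank F ↥(W ⊓ G)} := by
  classical
  have : Finite V := Module.finite_of_finite F
  have : Fintype (Submodule F V) := Fintype.ofFinite _
  have hB : B.IsAlt := hBalt
  obtain ⟨e, rfl⟩ := ht.two_dvd
  have hd : 5 * (e + 1) ^ 2 ≤ 2 * d := by nlinarith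
  have hed : 2 * e ≤ d := by nlinarith
  rw [Nat.mul_div_cancel_left _ two_pos]
  let ball (G : Submodule F V) : Finset (Submodule F V) :=
    {W | IsGenerator B d W ∧ d ≤ finrank F ↥(W ⊓ G) + e}
  have hcoe (G : Submodule F V) : {W : Submodule F V |
      (Module.finrank F W = d ∧ ∀ x ∈ W, ∀ y ∈ W, B x y = 0) ∧
        d - e ≤ Module.finrank F ↥(W ⊓ G)} = ball G := by
    ext W
    rw [mem_coe, mem_filter, Set.mem_ofPred_eq, Nat.sub_le_iff_le_add]
    exact (and_iff_right (mem_univ W)).symm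
  have hballekr (G : Submodule F V) (hG : IsGenerator B d G) :
      ∀ W₁ ∈ ball G, ∀ W₂ ∈ ball G, d - 2 * e ≤ finrank F ↥(W₁ ⊓ W₂) := by
    intro W₁ h₁ W₂ h₂
    simp only [ball, mem_filter, mem_univ, true_and] at h₁ h₂
    have h3 := Submodule.finrank_sup_add_finrank_inf_eq (W₁ ⊓ G) (W₂ ⊓ G)
    have h4 := Submodule.finrank_mono (sup_le inf_le_right inf_le_right : W₁ ⊓ G ⊔ W₂ ⊓ G ≤ G)
    have h5 := Submodule.finrank_mono
      (inf_le_inf inf_le_left inf_le_left : W₁ ⊓ G ⊓ (W₂ ⊓ G) ≤ W₁ ⊓ W₂)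
    have := hG.1
    lia
  have hdich (Z : Set (Submodule F V))
      (hZ : ∀ W ∈ Z, Module.finrank F W = d ∧ ∀ x ∈ W, ∀ y ∈ W, B x y = 0)
      (hZe : ∀ W₁ ∈ Z, ∀ W₂ ∈ Z, d - 2 * e ≤ Module.finrank F ↥(W₁ ⊓ W₂)) :
      (∃ G, IsGenerator B d G ∧ Z ⊆ ball G) ∨
        ∀ G, IsGenerator B d G → Z.ncard < #(ball G) := by
    have hmem (W : Submodule F V) : W ∈ Z.toFinset ↔ W ∈ Z := Set.mem_toFinset
    have h := exists_ball_or_card_lt hq hBnd hB hV hd Z.toFinset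
      (fun W hW => hZ W ((hmem W).1 hW))
      (fun W hW W' hW' => by have := hZe W ((hmem W).1 hW) W' ((hmem W').1 hW'); lia)
    refine h.imp ?_ fun h G hG => ?_
    · rintro ⟨G, hG, h⟩
      exact ⟨G, hG, fun W hW => by simpa [ball] using ⟨hZ W hW, h W ((hmem W).2 hW)⟩⟩
    · rw [Set.ncard_eq_toFinset_card']
      exact h G hG (ball G) fun W hW hWG => by simpa [ball] using ⟨hW, hWG⟩
  constructor
  · intro hmax
    have hge (G : Submodule F V) (hG : IsGenerator B d G) : #(ball G) ≤ Y.ncard := by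
      rw [← Set.ncard_coe_finset]
      exact hmax (ball G) (fun W hW => ((mem_filter.1 hW).2).1) (hballekr G hG)
    rcases hdich Y hYgen hYekr with ⟨G, hG, hYG⟩ | hlt
    · refine ⟨G, hG, (hcoe G).symm ▸ Set.eq_of_subset_of_ncard_le hYG ?_⟩
      rw [Set.ncard_coe_finset]
      exact hge G hG
    · obtain ⟨G, hG⟩ := exists_isGenerator hBnd hB hV
      exact absurd (hge G hG) (hlt G hG).not_ge
  · rintro ⟨G, hG, rfl⟩ Z hZ hZe
    rw [hcoe, Set.ncard_coe_finset]
    rcases hdich Z hZ hZe with ⟨G', hG', hZG⟩ | hlt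
    · rw [show #(ball G) = #(ball G') from
        card_ball_eq hBnd hB hV hG hG' (by lia), ← Set.ncard_coe_finset]
      exact Set.ncard_le_ncard hZG
    · exact (hlt G hG).le
end

section
/- Let q ≥ 3 be a prime power and let t and d be integers with t odd, t ≥ 1, and t ≤ √(8d/5) − 2 (equivalently, 5(t+2)² ≤ 8d). Then a (d,t)-EKR set Y of generators of the symplectic polar space W(2d−1,q) has maximum cardinality among all (d,t)-EKR sets if and only if there exists a (d−1)-dimensional totally isotropic subspace U of V (i.e., B(x,y) = 0 for all x, y ∈ U) such that Y is exactly the set of all generators W with dim(W ∩ U) ≥ d − (t+1)/2. -/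
namespace SymplecticEKR

open Module Submodule

section Geometry

variable {F V : Type*} [Field F] [AddCommGroup V] [Module F V]
  {B : LinearMap.BilinForm F V} {d : ℕ}

/-- `B` is a nondegenerate alternating form on a space of dimension `2 * d`. -/
structure IsSymplectic (B : LinearMap.BilinForm F V) (d : ℕ) : Prop where
  nondegenerate : B.Nondegenerate
  isAlt : B.IsAlt
  finrank_eq : finrank F V = 2 * d

/-- Totally isotropic subspaces of dimension `k`. -/
def IsIsotropic (B : LinearMap.BilinForm F V) (k : ℕ) (W : Submodule F V) : Prop :=
  finrank F W = k ∧ ∀ x ∈ W, ∀ y ∈ W, B x y = 0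

lemma orthogonal_sup (W W' : Submodule F V) :
    B.orthogonal (W ⊔ W') = B.orthogonal W ⊓ B.orthogonal W' := by
  refine le_antisymm (le_inf (B.orthogonal_le le_sup_left) (B.orthogonal_le le_sup_right)) ?_
  rintro x ⟨h₁, h₂⟩ y hy
  obtain ⟨a, ha, b, hb, rfl⟩ := mem_sup.1 hy
  simp [h₁ a ha, h₂ b hb]

lemma IsIsotropic.le_orthogonal {k : ℕ} {W : Submodule F V} (hW : IsIsotropic B k W) :
    W ≤ B.orthogonal W :=
  fun x hx y hy => hW.2 y hy x hx

variable [FiniteDimensional F V]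

namespace IsSymplectic

lemma finrank_orthogonal_add (hB : IsSymplectic B d) (W : Submodule F V) :
    finrank F (B.orthogonal W) + finrank F W = 2 * d := by
  have h := B.finrank_orthogonal hB.nondegenerate W
  have h' := W.finrank_le
  have := hB.finrank_eq
  omega

lemma orthogonal_orthogonal (hB : IsSymplectic B d) (W : Submodule F V) :
    B.orthogonal (B.orthogonal W) = W :=
  B.orthogonal_orthogonal hB.nondegenerate hB.isAlt.isRefl W

lemma orthogonal_inf (hB : IsSymplectic B d) (W W' : Submodule F V) :
    B.orthogonal (W ⊓ W') = B.orthogonal W ⊔ B.orthogonal W' := by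
  rw [← hB.orthogonal_orthogonal (B.orthogonal W ⊔ B.orthogonal W'), orthogonal_sup,
    hB.orthogonal_orthogonal, hB.orthogonal_orthogonal]

end IsSymplectic

lemma IsIsotropic.orthogonal_eq (hB : IsSymplectic B d) {W : Submodule F V}
    (hW : IsIsotropic B d W) : B.orthogonal W = W := by
  refine (eq_of_le_of_finrank_eq hW.le_orthogonal ?_).symm
  have := hB.finrank_orthogonal_add W
  have := hW.1
  omega

/-- Adjoining to an isotropic subspace a vector orthogonal to it. -/
lemma IsIsotropic.sup_span (hB : IsSymplectic B d) {k : ℕ} {W : Submodule F V}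
    (hW : IsIsotropic B k W) {v : V} (hv : v ∈ B.orthogonal W) (hvW : v ∉ W) :
    IsIsotropic B (k + 1) (W ⊔ span F {v}) := by
  constructor
  · rw [finrank_sup_span_singleton hvW, hW.1]
  · intro x hx y hy
    obtain ⟨a, ha, x', hx', rfl⟩ := mem_sup.1 hx
    obtain ⟨b, hb, y', hy', rfl⟩ := mem_sup.1 hy
    obtain ⟨r, rfl⟩ := mem_span_singleton.1 hx'
    obtain ⟨s, rfl⟩ := mem_span_singleton.1 hy'
    have h₁ : B a v = 0 := hv a ha
    have h₂ : B v b = 0 := hB.isAlt.isRefl _ _ (hv b hb)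
    have h₃ : B v v = 0 := hB.isAlt v
    simp [hW.2 a ha b hb, h₁, h₂, h₃]

lemma exists_isIsotropic (hB : IsSymplectic B d) : ∀ k ≤ d, ∃ W, IsIsotropic B k W
  | 0, _ => ⟨⊥, by simp [IsIsotropic]⟩
  | k + 1, hk => by
    obtain ⟨W, hW⟩ := exists_isIsotropic hB k (by omega)
    obtain ⟨v, hv, hvW⟩ : ∃ v ∈ B.orthogonal W, v ∉ W := by
      by_contra! h
      have := finrank_mono (show B.orthogonal W ≤ W from h)
      have := hB.finrank_orthogonal_add W
      have := hW.1
      omega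
    exact ⟨_, hW.sup_span hB hv hvW⟩

/-- Isotropic subspaces disjoint from a generator extend to isotropic complements. -/
lemma exists_isIsotropic_disjoint (hB : IsSymplectic B d) {A : Submodule F V}
    (hA : IsIsotropic B d A) : ∀ k ≤ d, ∃ L, IsIsotropic B k L ∧ Disjoint A L
  | 0, _ => ⟨⊥, by simp [IsIsotropic]⟩
  | k + 1, hk => by
    obtain ⟨L, hL, hAL⟩ := exists_isIsotropic_disjoint hB hA k (by omega)
    have hd := finrank_sup_add_finrank_inf_eq A L
    rw [hAL.eq_bot, finrank_bot, hA.1, hL.1] at hd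
    obtain ⟨v, hv, hvL⟩ : ∃ v ∈ B.orthogonal L, v ∉ A ⊔ L := by
      by_contra! h
      have h1 : B.orthogonal L ≤ (A ⊔ L) := h
      have h2 : B.orthogonal L = (B.orthogonal L ⊓ A) ⊔ L := by
        rw [inf_sup_assoc_of_le _ hL.le_orthogonal, inf_eq_left.2 h1]
      have h3 : B.orthogonal L ⊓ A = B.orthogonal (A ⊔ L) := by
        rw [orthogonal_sup, hA.orthogonal_eq hB, inf_comm]
      have h4 := finrank_add_le_finrank_add_finrank (B.orthogonal L ⊓ A) L
      rw [← h2, h3] at h4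
      have := hB.finrank_orthogonal_add L
      have := hB.finrank_orthogonal_add (A ⊔ L)
      have := hL.1
      omega
    refine ⟨_, hL.sup_span hB hv (fun h => hvL (mem_sup_right h)), ?_⟩
    rw [disjoint_def]
    intro x hxA hx
    obtain ⟨a, ha, x', hx', rfl⟩ := mem_sup.1 hx
    obtain ⟨r, rfl⟩ := mem_span_singleton.1 hx'
    have hr : r = 0 := by
      by_contra hr
      refine hvL ?_
      rw [← smul_mem_iff _ hr]
      have := sub_mem (mem_sup_left (T := L) hxA) (mem_sup_right (S := A) ha)
      simpa using this
    subst hr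
    simp only [zero_smul, add_zero] at hxA ⊢
    exact disjoint_def.1 hAL _ hxA ha

lemma exists_generator_isCompl (hB : IsSymplectic B d) {A : Submodule F V}
    (hA : IsIsotropic B d A) : ∃ L, IsIsotropic B d L ∧ IsCompl A L := by
  obtain ⟨L, hL, hAL⟩ := exists_isIsotropic_disjoint hB hA d le_rfl
  refine ⟨L, hL, hAL, codisjoint_iff.2 (eq_top_of_finrank_eq ?_)⟩
  have hd := finrank_sup_add_finrank_inf_eq A L
  rw [hAL.eq_bot, finrank_bot, hA.1, hL.1] at hd
  have := hB.finrank_eq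
  omega

/-- The pairing of a generator with a complementary generator. -/
lemma exists_dualEquiv (hB : IsSymplectic B d) {A L : Submodule F V}
    (hA : IsIsotropic B d A) (hL : IsIsotropic B d L) (hAL : IsCompl A L) :
    ∃ φ : A ≃ₗ[F] Dual F L, ∀ a l, φ a l = B a l := by
  let φ : A →ₗ[F] Dual F L := L.subtype.dualMap ∘ₗ B ∘ₗ A.subtype
  have hφ : ∀ a l, φ a l = B a l := fun a l => rfl
  have hinj : Function.Injective φ := by
    rw [← LinearMap.ker_eq_bot, LinearMap.ker_eq_bot']
    intro a ha
    have h : (a : V) ∈ B.orthogonal L := fun l hl => by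
      refine hB.isAlt.isRefl _ _ ?_
      rw [← hφ a ⟨l, hl⟩, ha]; rfl
    rw [hL.orthogonal_eq hB] at h
    exact Subtype.ext (disjoint_def.1 hAL.disjoint _ a.2 h)
  refine ⟨LinearEquiv.ofInjectiveOfFinrankEq φ hinj ?_, fun a l => ?_⟩
  · rw [Subspace.dual_finrank_eq, hA.1, hL.1]
  · exact hφ a l

/-- A linear isomorphism between generators `L`, `L'` extends to an isometry mapping given
complementary generators onto each other. -/
lemma exists_isometry_extension (hB : IsSymplectic B d) {A L A' L' : Submodule F V}
    (hA : IsIsotropic B d A) (hL : IsIsotropic B d L) (hAL : IsCompl A L)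
    (hA' : IsIsotropic B d A') (hL' : IsIsotropic B d L') (hAL' : IsCompl A' L')
    (h : L ≃ₗ[F] L') :
    ∃ g : V ≃ₗ[F] V, (∀ x y, B (g x) (g y) = B x y) ∧ A.map (g : V →ₗ[F] V) = A' ∧
      ∀ l : L, g l = h l := by
  obtain ⟨φ, hφ⟩ := exists_dualEquiv hB hA hL hAL
  obtain ⟨φ', hφ'⟩ := exists_dualEquiv hB hA' hL' hAL'
  let k : A ≃ₗ[F] A' := φ ≪≫ₗ h.symm.dualMap ≪≫ₗ φ'.symm
  have hk : ∀ a l, B (k a) (h l) = B a l := fun a l => by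
    rw [← hφ', ← hφ]; simp [k]
  let g : V ≃ₗ[F] V := (A.prodEquivOfIsCompl L hAL).symm ≪≫ₗ k.prodCongr h ≪≫ₗ
    A'.prodEquivOfIsCompl L' hAL'
  have hg : ∀ (a : A) (l : L), g (a + l) = k a + h l := fun a l => by
    have : (A.prodEquivOfIsCompl L hAL).symm (a + l) = (a, l) := by
      rw [LinearEquiv.symm_apply_eq]; simp
    simp [g, this]
  have hdec : ∀ x : V, ∃ (a : A) (l : L), x = a + l := fun x => by
    obtain ⟨a, ha, l, hl, rfl⟩ := mem_sup.1 (hAL.sup_eq_top ▸ mem_top : x ∈ A ⊔ L)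
    exact ⟨⟨a, ha⟩, ⟨l, hl⟩, rfl⟩
  refine ⟨g, fun x y => ?_, ?_, fun l => ?_⟩
  · obtain ⟨a, l, rfl⟩ := hdec x
    obtain ⟨b, m, rfl⟩ := hdec y
    rw [hg, hg]
    have e1 := hA.2 a a.2 b b.2
    have e2 := hA'.2 _ (k a).2 _ (k b).2
    have e3 := hL.2 l l.2 m m.2
    have e4 := hL'.2 _ (h l).2 _ (h m).2
    have e5 : B (h l) (k b) = B l b := by
      rw [← hB.isAlt.neg_eq, hk, hB.isAlt.neg_eq]
    simp [e1, e2, e3, e4, e5, hk]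
  · have hle : A.map (g : V →ₗ[F] V) ≤ A' := by
      rintro _ ⟨a, ha, rfl⟩
      have := hg ⟨a, ha⟩ 0
      simp only [ZeroMemClass.coe_zero, add_zero, map_zero] at this
      simp only [LinearEquiv.coe_coe, this]
      exact (k _).2
    refine eq_of_le_of_finrank_eq hle ?_
    rw [LinearEquiv.finrank_map_eq, hA.1, hA'.1]
  · simpa using hg 0 l

/-- The symplectic group is transitive on pairs of a generator `A` and a family of vectors
linearly independent modulo `A`, up to changing the vectors modulo `A`. -/
lemma exists_isometry (hB : IsSymplectic B d) {A A' : Submodule F V}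
    (hA : IsIsotropic B d A) (hA' : IsIsotropic B d A') {n : ℕ} {v v' : Fin n → V}
    (hv : LinearIndependent F (A.mkQ ∘ v)) (hv' : LinearIndependent F (A'.mkQ ∘ v')) :
    ∃ g : V ≃ₗ[F] V, (∀ x y, B (g x) (g y) = B x y) ∧ A.map (g : V →ₗ[F] V) = A' ∧
      ∀ i, g (v i) - v' i ∈ A' := by
  obtain ⟨L, hL, hAL⟩ := exists_generator_isCompl hB hA
  obtain ⟨L', hL', hAL'⟩ := exists_generator_isCompl hB hA'
  let p := A.quotientEquivOfIsCompl L hAL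
  let p' := A'.quotientEquivOfIsCompl L' hAL'
  obtain ⟨e⟩ : Nonempty ((V ⧸ A) ≃ₗ[F] (V ⧸ A')) := by
    refine FiniteDimensional.nonempty_linearEquiv_of_finrank_eq ?_
    have h1 := A.finrank_quotient_add_finrank
    have h2 := A'.finrank_quotient_add_finrank
    rw [hA.1] at h1
    rw [hA'.1] at h2
    omega
  have hev := hv.map' (e : (V ⧸ A) →ₗ[F] (V ⧸ A')) e.ker
  obtain ⟨f, hf⟩ := Submodule.exists_linearEquiv_restrict_eq
    (hev.linearCombinationEquiv.symm ≪≫ₗ hv'.linearCombinationEquiv)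
  have hfv : ∀ i, f (e (A.mkQ (v i))) = A'.mkQ (v' i) := fun i => by
    have hmem : e (A.mkQ (v i)) ∈ span F (Set.range
        ((e : (V ⧸ A) →ₗ[F] (V ⧸ A')) ∘ (A.mkQ ∘ v))) := subset_span ⟨i, rfl⟩
    have h1 := hf ⟨_, hmem⟩
    rw [← h1]
    have h2 : hev.linearCombinationEquiv.symm ⟨_, hmem⟩ = Finsupp.single i 1 := by
      rw [LinearEquiv.symm_apply_eq]
      ext
      simp
    rw [LinearEquiv.trans_apply, h2]
    simp
  obtain ⟨g, hg, hgA, hgL⟩ := exists_isometry_extension hB hA hL hAL hA' hL' hAL'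
    (p.symm ≪≫ₗ e ≪≫ₗ f ≪≫ₗ p')
  refine ⟨g, hg, hgA, fun i => ?_⟩
  obtain ⟨a, ha, l, hl, hal⟩ := mem_sup.1 (hAL.sup_eq_top ▸ mem_top : v i ∈ A ⊔ L)
  have h1 : A.mkQ (v i) = p.symm ⟨l, hl⟩ := by
    rw [quotientEquivOfIsCompl_symm_apply, ← hal]
    simp [ha]
  have h2 : A'.mkQ (g l) = A'.mkQ (v' i) := by
    rw [hgL ⟨l, hl⟩, ← hfv, h1]
    set z := f (e (p.symm ⟨l, hl⟩))
    have : p'.symm (p' z) = z := p'.symm_apply_apply z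
    rw [quotientEquivOfIsCompl_symm_apply] at this
    simpa using this
  rw [← hal, map_add, add_sub_assoc]
  refine add_mem ?_ ?_
  · rw [← hgA]; exact ⟨a, ha, rfl⟩
  · rwa [← Submodule.ker_mkQ A', LinearMap.mem_ker, map_sub, sub_eq_zero]

/-! ### Relative position of generators -/

lemma IsIsotropic.sup_eq_orthogonal_inf (hB : IsSymplectic B d) {A C : Submodule F V}
    (hA : IsIsotropic B d A) (hC : IsIsotropic B d C) : B.orthogonal (A ⊓ C) = A ⊔ C := by
  rw [hB.orthogonal_inf, hA.orthogonal_eq hB, hC.orthogonal_eq hB]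

lemma IsIsotropic.finrank_inf_add_finrank_inf (hB : IsSymplectic B d) {A C C' : Submodule F V}
    (hA : IsIsotropic B d A) (hC : IsIsotropic B d C) (hC' : IsIsotropic B d C')
    (h : (A ⊔ C) ⊓ (A ⊔ C') = A) :
    finrank F ↥(A ⊓ C) + finrank F ↥(A ⊓ C') = d + finrank F ↥(C ⊓ C') := by
  have hsup : (A ⊓ C) ⊔ (A ⊓ C') = A := by
    rw [← hB.orthogonal_orthogonal ((A ⊓ C) ⊔ (A ⊓ C')), orthogonal_sup,
      hA.sup_eq_orthogonal_inf hB hC, hA.sup_eq_orthogonal_inf hB hC', h, hA.orthogonal_eq hB]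
  have hle : C ⊓ C' ≤ A := by
    rintro x ⟨hx, hx'⟩
    rw [← hA.orthogonal_eq hB]
    nth_rewrite 1 [← hsup]
    rw [orthogonal_sup]
    exact ⟨fun y hy => hC.2 y hy.2 x hx, fun y hy => hC'.2 y hy.2 x hx'⟩
  have hinf : (A ⊓ C) ⊓ (A ⊓ C') = C ⊓ C' := by
    rw [← inf_inf_distrib_left, inf_eq_right.2 hle]
  have := finrank_sup_add_finrank_inf_eq (A ⊓ C) (A ⊓ C')
  rw [hsup, hinf, hA.1] at this
  exact this.symm

lemma finrank_inf_add_le (A C C' : Submodule F V) :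
    finrank F ↥(C ⊓ A) + finrank F ↥(C' ⊓ A) ≤ finrank F A + finrank F ↥(C ⊓ C') := by
  have h := finrank_sup_add_finrank_inf_eq (C ⊓ A) (C' ⊓ A)
  have h1 := finrank_mono (show (C ⊓ A) ⊔ (C' ⊓ A) ≤ A from sup_le inf_le_right inf_le_right)
  have h2 := finrank_mono (show (C ⊓ A) ⊓ (C' ⊓ A) ≤ C ⊓ C' from
    inf_le_inf inf_le_left inf_le_left)
  omega

/-- The projection of a generator `C` to the generators through an isotropic subspace `P`. -/
lemma exists_gate (hB : IsSymplectic B d) {k : ℕ} {P C : Submodule F V}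
    (hP : IsIsotropic B k P) (hC : IsIsotropic B d C) :
    ∃ A, IsIsotropic B d A ∧ P ≤ A ∧
      finrank F ↥(C ⊓ A) + k = d + finrank F ↥(P ⊓ C) ∧
      ∀ W, IsIsotropic B d W → P ≤ W →
        finrank F ↥(A ⊓ W) + finrank F ↥(P ⊓ C) = k + finrank F ↥(C ⊓ W) := by
  have hdim : finrank F ↥(B.orthogonal P ⊓ C) + k = d + finrank F ↥(P ⊓ C) := by
    have h1 : B.orthogonal P ⊓ C = B.orthogonal (P ⊔ C) := by
      rw [orthogonal_sup, hC.orthogonal_eq hB]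
    have h2 := hB.finrank_orthogonal_add (P ⊔ C)
    have h3 := finrank_sup_add_finrank_inf_eq P C
    rw [hP.1, hC.1] at h3
    rw [h1]
    omega
  have hinf : P ⊓ (B.orthogonal P ⊓ C) = P ⊓ C := by
    rw [← inf_assoc, inf_eq_left.2 hP.le_orthogonal]
  have hdimA : finrank F ↥(P ⊔ (B.orthogonal P ⊓ C)) = d := by
    have h := finrank_sup_add_finrank_inf_eq P (B.orthogonal P ⊓ C)
    rw [hinf, hP.1] at h
    omega
  have hAP : P ⊔ (B.orthogonal P ⊓ C) ≤ B.orthogonal P := sup_le hP.le_orthogonal inf_le_left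
  refine ⟨P ⊔ (B.orthogonal P ⊓ C), ⟨hdimA, ?_⟩, le_sup_left, ?_, ?_⟩
  · intro x hx y hy
    obtain ⟨a, ha, x', hx', rfl⟩ := mem_sup.1 hx
    obtain ⟨b, hb, y', hy', rfl⟩ := mem_sup.1 hy
    have h1 : B a y' = 0 := hy'.1 a ha
    have h2 : B x' b = 0 := hB.isAlt.isRefl _ _ (hx'.1 b hb)
    simp [hP.2 a ha b hb, h1, h2, hC.2 x' hx'.2 y' hy'.2]
  · have : C ⊓ (P ⊔ (B.orthogonal P ⊓ C)) = B.orthogonal P ⊓ C :=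
      le_antisymm (le_inf (inf_le_right.trans hAP) inf_le_left) (le_inf inf_le_right le_sup_right)
    rw [this, hdim]
  · intro W hW hPW
    have hWP : W ≤ B.orthogonal P := by
      rw [← hW.orthogonal_eq hB]; exact B.orthogonal_le hPW
    have h1 : (P ⊔ (B.orthogonal P ⊓ C)) ⊓ W = P ⊔ (C ⊓ W) := by
      rw [sup_inf_assoc_of_le _ hPW, inf_assoc, inf_eq_right.2 (inf_le_right.trans hWP)]
    have h2 : P ⊓ (C ⊓ W) = P ⊓ C := by
      rw [← inf_assoc]; exact inf_eq_left.2 (inf_le_left.trans hPW)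
    have h3 := finrank_sup_add_finrank_inf_eq P (C ⊓ W)
    rw [h2, hP.1] at h3
    rw [h1, h3]

/-- If `W₀`, `W₁` realize the diameter of a set of generators containing `C`, then `C` is within
half the diameter of some generator through `W₀ ⊓ W₁`. -/
lemma exists_near_generator (hB : IsSymplectic B d) {W₀ W₁ C : Submodule F V}
    (h₀ : IsIsotropic B d W₀) (h₁ : IsIsotropic B d W₁) (hC : IsIsotropic B d C)
    (hC₀ : finrank F ↥(W₀ ⊓ W₁) ≤ finrank F ↥(C ⊓ W₀))
    (hC₁ : finrank F ↥(W₀ ⊓ W₁) ≤ finrank F ↥(C ⊓ W₁)) :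
    ∃ A, IsIsotropic B d A ∧ W₀ ⊓ W₁ ≤ A ∧
      d + finrank F ↥(W₀ ⊓ W₁) ≤ 2 * finrank F ↥(C ⊓ A) := by
  have hP : IsIsotropic B (finrank F ↥(W₀ ⊓ W₁)) (W₀ ⊓ W₁) :=
    ⟨rfl, fun x hx y hy => h₀.2 x hx.1 y hy.1⟩
  obtain ⟨A, hA, hPA, hCA, hW⟩ := exists_gate hB hP hC
  refine ⟨A, hA, hPA, ?_⟩
  have e₀ := hW W₀ h₀ inf_le_left
  have e₁ := hW W₁ h₁ inf_le_right
  have h := finrank_inf_add_le A W₀ W₁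
  rw [inf_comm W₀ A, inf_comm W₁ A, hA.1] at h
  omega

lemma IsIsotropic.finrank_sup {A C : Submodule F V}
    (hA : IsIsotropic B d A) (hC : IsIsotropic B d C) :
    finrank F ↥(A ⊔ C) + finrank F ↥(C ⊓ A) = 2 * d := by
  have h := finrank_sup_add_finrank_inf_eq A C
  rw [hA.1, hC.1, inf_comm] at h
  omega

/-- For a vector `v` outside a generator `A`, the hyperplane `A ∩ v^⊥` of `A`. -/
lemma IsIsotropic.inf_orthogonal_span (hB : IsSymplectic B d) {A : Submodule F V}
    (hA : IsIsotropic B d A) {v : V} (hv : v ∉ A) :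
    IsIsotropic B (d - 1) (A ⊓ B.orthogonal (span F {v})) := by
  refine ⟨?_, fun x hx y hy => hA.2 x hx.1 y hy.1⟩
  have h1 : A ⊓ B.orthogonal (span F {v}) = B.orthogonal (A ⊔ span F {v}) := by
    rw [orthogonal_sup, hA.orthogonal_eq hB]
  have h2 := hB.finrank_orthogonal_add (A ⊔ span F {v})
  rw [finrank_sup_span_singleton hv, hA.1] at h2
  rw [h1]
  omega

lemma exists_adjacent (hB : IsSymplectic B d) (hd : 1 ≤ d) {A : Submodule F V}
    (hA : IsIsotropic B d A) :
    ∃ A', IsIsotropic B d A' ∧ finrank F ↥(A ⊓ A') + 1 = d := by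
  obtain ⟨v, hv⟩ : ∃ v, v ∉ A := by
    by_contra! h
    have h1 := hB.finrank_eq
    have h2 := hA.1
    rw [eq_top_iff'.2 h, finrank_top] at h2
    omega
  have hU := hA.inf_orthogonal_span hB hv
  have hA' := hU.sup_span hB (v := v)
    (fun x hx => hB.isAlt.isRefl _ _ (hx.2 v (mem_span_singleton_self v)))
    (fun h => hv (mem_inf.1 h).1)
  rw [Nat.sub_add_cancel hd] at hA'
  refine ⟨_, hA', ?_⟩
  have h1 := finrank_mono (le_inf inf_le_left le_sup_left :
    A ⊓ B.orthogonal (span F {v}) ≤ A ⊓ (A ⊓ B.orthogonal (span F {v}) ⊔ span F {v}))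
  have h2 := finrank_lt_finrank_of_lt (inf_le_right.lt_of_not_ge
    (fun h => hv (mem_inf.1 (h (mem_sup_right (mem_span_singleton_self v)))).1) :
    A ⊓ (A ⊓ B.orthogonal (span F {v}) ⊔ span F {v}) <
      A ⊓ B.orthogonal (span F {v}) ⊔ span F {v})
  rw [hU.1] at h1
  rw [hA'.1] at h2
  omega

lemma exists_eq_inf_orthogonal_span (hB : IsSymplectic B d) (hd : 1 ≤ d) {U : Submodule F V}
    (hU : IsIsotropic B (d - 1) U) :
    ∃ A v, IsIsotropic B d A ∧ v ∉ A ∧ U = A ⊓ B.orthogonal (span F {v}) := by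
  have hUo := hB.finrank_orthogonal_add U
  rw [hU.1] at hUo
  obtain ⟨x, hx, hxU⟩ : ∃ x ∈ B.orthogonal U, x ∉ U := by
    by_contra! h
    have := finrank_mono (show B.orthogonal U ≤ U from h)
    have := hU.1
    omega
  have hA := hU.sup_span hB hx hxU
  rw [Nat.sub_add_cancel hd] at hA
  obtain ⟨v, hv, hvA⟩ : ∃ v ∈ B.orthogonal U, v ∉ U ⊔ span F {x} := by
    by_contra! h
    have := finrank_mono (show B.orthogonal U ≤ U ⊔ span F {x} from h)
    have := hA.1
    omega
  refine ⟨_, v, hA, hvA, eq_of_le_of_finrank_eq (le_inf le_sup_left ?_) ?_⟩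
  · rw [← hB.orthogonal_orthogonal U]
    exact B.orthogonal_le (by simpa [span_le] using hv)
  · rw [hU.1, (hA.inf_orthogonal_span hB hvA).1]

/-- Membership in the extremal example attached to the hyperplane `A ∩ v^⊥` of `A`. -/
lemma le_finrank_inf_hyperplane_iff (hB : IsSymplectic B d) {A C : Submodule F V}
    (hA : IsIsotropic B d A) (hC : IsIsotropic B d C) {v : V} (hv : v ∉ A) {s : ℕ}
    (hs : s + 1 ≤ d) :
    d - (s + 1) ≤ finrank F ↥(C ⊓ (A ⊓ B.orthogonal (span F {v}))) ↔
      d ≤ finrank F ↥(C ⊓ A) + s ∨ (finrank F ↥(C ⊓ A) + (s + 1) = d ∧ v ∈ A ⊔ C) := by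
  have hle : finrank F ↥(C ⊓ (A ⊓ B.orthogonal (span F {v}))) ≤ finrank F ↥(C ⊓ A) :=
    finrank_mono (inf_le_inf_left _ inf_le_left)
  have hsum := finrank_inf_add_le A C (A ⊓ B.orthogonal (span F {v}))
  rw [inf_eq_left.2 (inf_le_left : A ⊓ B.orthogonal (span F {v}) ≤ A),
    (hA.inf_orthogonal_span hB hv).1, hA.1] at hsum
  have hmem : v ∈ A ⊔ C ↔ C ⊓ A ≤ B.orthogonal (span F {v}) := by
    rw [← hA.sup_eq_orthogonal_inf hB hC]
    constructor
    · intro h x hx y hy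
      obtain ⟨r, rfl⟩ := mem_span_singleton.1 hy
      have : B v x = 0 := hB.isAlt.isRefl _ _ (h x ⟨hx.2, hx.1⟩)
      simp [this]
    · intro h x hx
      exact hB.isAlt.isRefl _ _ (h ⟨hx.2, hx.1⟩ v (mem_span_singleton_self v))
  constructor
  · intro h
    by_cases h' : d ≤ finrank F ↥(C ⊓ A) + s
    · exact Or.inl h'
    · refine Or.inr ⟨by omega, hmem.2 ?_⟩
      have : C ⊓ (A ⊓ B.orthogonal (span F {v})) = C ⊓ A :=
        eq_of_le_of_finrank_le (inf_le_inf_left _ inf_le_left) (by omega)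
      rw [← this]
      exact inf_le_right.trans inf_le_right
  · rintro (h | ⟨h, hv'⟩)
    · omega
    · have : C ⊓ (A ⊓ B.orthogonal (span F {v})) = C ⊓ A := by
        rw [← inf_assoc, inf_eq_left.2 (hmem.1 hv')]
      rw [this]
      omega

/-- Passing to an adjacent generator. -/
lemma inf_adjacent (hB : IsSymplectic B d) {A A' C : Submodule F V}
    (hA : IsIsotropic B d A) (hA' : IsIsotropic B d A') (hC : IsIsotropic B d C)
    (hAA' : finrank F ↥(A ⊓ A') + 1 = d) (h : ¬ A' ≤ A ⊔ C) :
    finrank F ↥(C ⊓ A') + 1 = finrank F ↥(C ⊓ A) ∧ A ≤ A' ⊔ C := by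
  have hnot : ¬ A ⊓ C ≤ A' := fun hle => h <| by
    rw [← hA.sup_eq_orthogonal_inf hB hC, ← hA'.orthogonal_eq hB]
    exact B.orthogonal_le hle
  obtain ⟨a, ha, haA'⟩ := SetLike.not_le_iff_exists.1 hnot
  have hA2 : (A ⊓ A') ⊔ span F {a} = A := by
    refine eq_of_le_of_finrank_eq (sup_le inf_le_left (by simpa using ha.1)) ?_
    rw [finrank_sup_span_singleton (fun h => haA' (mem_inf.1 h).2), hAA', hA.1]
  have hle : C ⊓ A' ≤ A := by
    rintro x ⟨hxC, hxA'⟩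
    rw [← hA.orthogonal_eq hB]
    nth_rewrite 1 [← hA2]
    rw [orthogonal_sup]
    refine ⟨fun y hy => hA'.2 y hy.2 x hxA', fun y hy => ?_⟩
    obtain ⟨r, rfl⟩ := mem_span_singleton.1 hy
    simp [hC.2 a ha.2 x hxC]
  have hinf : C ⊓ A' = (A ⊓ C) ⊓ (A ⊓ A') := by
    rw [← inf_inf_distrib_left, inf_eq_right.2 hle]
  constructor
  · have h1 := finrank_sup_add_finrank_inf_eq (A ⊓ C) (A ⊓ A')
    have h2 : (A ⊓ C) ⊔ (A ⊓ A') = A := by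
      refine le_antisymm (sup_le inf_le_left inf_le_left) ?_
      nth_rewrite 1 [← hA2]
      exact sup_le le_sup_right (by simpa using mem_sup_left ha)
    rw [h2, ← hinf, hA.1] at h1
    rw [inf_comm C A]
    omega
  · rw [← hA'.sup_eq_orthogonal_inf hB hC, inf_comm A' C]
    nth_rewrite 1 [← hA.orthogonal_eq hB]
    exact B.orthogonal_le hle

end Geometry

section Counting

/-- Double counting: an inequality version for cardinalities of sets. -/
lemma ncard_mul_le_ncard_mul {α β : Type*} [Finite α] [Finite β] (r : α → β → Prop)
    {S : Set α} {T : Set β} {m n : ℕ} (hm : ∀ a ∈ S, m ≤ {b ∈ T | r a b}.ncard)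
    (hn : ∀ b ∈ T, {a ∈ S | r a b}.ncard ≤ n) : S.ncard * m ≤ T.ncard * n := by
  classical
  have := Fintype.ofFinite α
  have := Fintype.ofFinite β
  rw [Set.ncard_eq_toFinset_card', Set.ncard_eq_toFinset_card']
  refine Finset.card_mul_le_card_mul r (fun a ha => ?_) fun b hb => ?_
  · convert hm a (by simpa using ha)
    rw [Set.ncard_eq_toFinset_card']
    congr 1
    ext; simp [Finset.bipartiteAbove]
  · convert hn b (by simpa using hb)
    rw [Set.ncard_eq_toFinset_card']
    congr 1
    ext; simp [Finset.bipartiteBelow]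

lemma ncard_mul_eq_ncard_mul {α β : Type*} [Finite α] [Finite β] (r : α → β → Prop)
    {S : Set α} {T : Set β} {m n : ℕ} (hm : ∀ a ∈ S, {b ∈ T | r a b}.ncard = m)
    (hn : ∀ b ∈ T, {a ∈ S | r a b}.ncard = n) : S.ncard * m = T.ncard * n :=
  (ncard_mul_le_ncard_mul r (fun a ha => (hm a ha).ge) fun b hb => (hn b hb).le).antisymm
    (ncard_mul_le_ncard_mul (fun b a => r a b) (fun b hb => (hn b hb).ge)
      fun a ha => (hm a ha).le)

variable {F V : Type*} [Field F] [AddCommGroup V] [Module F V] [FiniteDimensional F V]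
  {B : LinearMap.BilinForm F V} {d : ℕ}

/-- The generators `C` whose intersection with `A` has dimension satisfying `p` and such that
`A + C` contains all vectors of the family `v`. -/
def generatorsNear (B : LinearMap.BilinForm F V) (d : ℕ) (A : Submodule F V) (p : ℕ → Prop)
    {n : ℕ} (v : Fin n → V) : Set (Submodule F V) :=
  {C | IsIsotropic B d C ∧ p (finrank F ↥(C ⊓ A)) ∧ ∀ i, v i ∈ A ⊔ C}

/-- The generators at distance `k` from `A` in the dual polar graph. -/
def sphere (B : LinearMap.BilinForm F V) (d : ℕ) (A : Submodule F V) (k : ℕ) :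
    Set (Submodule F V) :=
  {C | IsIsotropic B d C ∧ finrank F ↥(C ⊓ A) + k = d}

/-- The generators at distance at most `k` from `A` in the dual polar graph. -/
def ball (B : LinearMap.BilinForm F V) (d : ℕ) (A : Submodule F V) (k : ℕ) :
    Set (Submodule F V) :=
  {C | IsIsotropic B d C ∧ d ≤ finrank F ↥(C ⊓ A) + k}

lemma sphere_zero {A : Submodule F V} (hA : IsIsotropic B d A) : sphere B d A 0 = {A} := by
  ext C
  simp only [sphere, add_zero, Set.mem_ofPred_eq, Set.mem_singleton_iff]
  constructor
  · rintro ⟨hC, h⟩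
    have h1 : C ⊓ A = C := eq_of_le_of_finrank_eq inf_le_left (h.trans hC.1.symm)
    have h2 : C ⊓ A = A := eq_of_le_of_finrank_eq inf_le_right (h.trans hA.1.symm)
    exact h1.symm.trans h2
  · rintro rfl
    exact ⟨hA, by rw [inf_idem, hA.1]⟩

/-- Sets of generators pairwise at distance at most `t`. -/
def IsEKR (B : LinearMap.BilinForm F V) (d t : ℕ) (Y : Set (Submodule F V)) : Prop :=
  (∀ W ∈ Y, IsIsotropic B d W) ∧ ∀ W₁ ∈ Y, ∀ W₂ ∈ Y, d - t ≤ finrank F ↥(W₁ ⊓ W₂)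

/-- The generators meeting `U` in a subspace of dimension at least `d - (s + 1)`. -/
def star (B : LinearMap.BilinForm F V) (d s : ℕ) (U : Submodule F V) : Set (Submodule F V) :=
  {W | IsIsotropic B d W ∧ d - (s + 1) ≤ finrank F ↥(W ⊓ U)}

lemma isEKR_star {U : Submodule F V} {s : ℕ} (hU : IsIsotropic B (d - 1) U)
    (hs : 2 * s + 2 ≤ d) : IsEKR B d (2 * s + 1) (star B d s U) := by
  refine ⟨fun W hW => hW.1, fun W₁ h₁ W₂ h₂ => ?_⟩
  have h := finrank_inf_add_le U W₁ W₂
  have := h₁.2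
  have := h₂.2
  have := hU.1
  omega

lemma star_eq_union (hB : IsSymplectic B d) {A : Submodule F V} (hA : IsIsotropic B d A)
    {v : V} (hv : v ∉ A) {s : ℕ} (hs : s + 1 ≤ d) :
    star B d s (A ⊓ B.orthogonal (span F {v})) =
      ball B d A s ∪ {C ∈ sphere B d A (s + 1) | v ∈ A ⊔ C} := by
  ext C
  by_cases hC : IsIsotropic B d C
  · simp only [star, ball, sphere, Set.mem_union, Set.mem_ofPred_eq, hC, true_and,
      le_finrank_inf_hyperplane_iff hB hA hC hv hs]
  · simp [star, ball, sphere, hC]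

variable [Finite F]

instance finite_submodule : Finite (Submodule F V) :=
  have := Module.finite_of_finite F (M := V)
  Finite.of_injective ((↑) : Submodule F V → Set V) SetLike.coe_injective

lemma ncard_coe (W : Submodule F V) : (W : Set V).ncard = Nat.card F ^ finrank F W := by
  have := Module.finite_of_finite F (M := V)
  rw [← Nat.card_coe_set_eq]
  exact Module.natCard_eq_pow_finrank

lemma ncard_diff_coe {W A : Submodule F V} (h : A ≤ W) :
    ((W : Set V) \ A).ncard = Nat.card F ^ finrank F W - Nat.card F ^ finrank F A := by
  have := Module.finite_of_finite F (M := V)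
  rw [Set.ncard_sdiff (by exact_mod_cast h), ncard_coe, ncard_coe]

lemma ncard_generatorsNear_le (hB : IsSymplectic B d) {A A' : Submodule F V}
    (hA : IsIsotropic B d A) (hA' : IsIsotropic B d A') (p : ℕ → Prop) {n : ℕ} {v v' : Fin n → V}
    (hv : LinearIndependent F (A.mkQ ∘ v)) (hv' : LinearIndependent F (A'.mkQ ∘ v')) :
    (generatorsNear B d A p v).ncard ≤ (generatorsNear B d A' p v').ncard := by
  obtain ⟨g, hg, rfl, hgv⟩ := exists_isometry hB hA hA' hv hv'
  refine Set.ncard_le_ncard_of_injOn (fun C => C.map (g : V →ₗ[F] V)) ?_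
    (map_injective_of_injective g.injective).injOn
  rintro C ⟨hC, hp, hvC⟩
  refine ⟨⟨by rw [LinearEquiv.finrank_map_eq, hC.1], ?_⟩, ?_, fun i => ?_⟩
  · rintro _ ⟨x, hx, rfl⟩ _ ⟨y, hy, rfl⟩
    exact (hg x y).trans (hC.2 x hx y hy)
  · rwa [← map_inf _ g.injective, LinearEquiv.finrank_map_eq]
  · have h1 : g (v i) ∈ A.map (g : V →ₗ[F] V) ⊔ C.map (g : V →ₗ[F] V) := by
      rw [← Submodule.map_sup]
      exact ⟨v i, hvC i, rfl⟩
    simpa using sub_mem h1 (mem_sup_left (hgv i))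

lemma ncard_generatorsNear (hB : IsSymplectic B d) {A A' : Submodule F V}
    (hA : IsIsotropic B d A) (hA' : IsIsotropic B d A') (p : ℕ → Prop) {n : ℕ} {v v' : Fin n → V}
    (hv : LinearIndependent F (A.mkQ ∘ v)) (hv' : LinearIndependent F (A'.mkQ ∘ v')) :
    (generatorsNear B d A p v).ncard = (generatorsNear B d A' p v').ncard :=
  (ncard_generatorsNear_le hB hA hA' p hv hv').antisymm
    (ncard_generatorsNear_le hB hA' hA p hv' hv)

lemma ncard_ball (hB : IsSymplectic B d) {A A' : Submodule F V}
    (hA : IsIsotropic B d A) (hA' : IsIsotropic B d A') (k : ℕ) :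
    (ball B d A k).ncard = (ball B d A' k).ncard := by
  simpa [generatorsNear, ball] using ncard_generatorsNear hB hA hA' (fun n => d ≤ n + k)
    (v := ![]) (v' := ![]) (linearIndependent_empty_type) (linearIndependent_empty_type)

lemma ncard_sphere_point (hB : IsSymplectic B d) {A A' : Submodule F V}
    (hA : IsIsotropic B d A) (hA' : IsIsotropic B d A') (k : ℕ) {v v' : V}
    (hv : v ∉ A) (hv' : v' ∉ A') :
    {C ∈ sphere B d A k | v ∈ A ⊔ C}.ncard = {C ∈ sphere B d A' k | v' ∈ A' ⊔ C}.ncard := by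
  have h : ∀ {A : Submodule F V} {v : V}, v ∉ A → LinearIndependent F (A.mkQ ∘ ![v]) := by
    intro A v hv
    rw [linearIndependent_unique_iff]
    simpa using hv
  simpa [generatorsNear, sphere, and_assoc] using
    ncard_generatorsNear hB hA hA' (fun n => n + k = d) (h hv) (h hv')

lemma ncard_sphere_pair (hB : IsSymplectic B d) {A : Submodule F V}
    (hA : IsIsotropic B d A) (k : ℕ) {v w v' w' : V}
    (hv : v ∉ A) (hw : w ∉ A ⊔ span F {v}) (hv' : v' ∉ A) (hw' : w' ∉ A ⊔ span F {v'}) :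
    {C ∈ sphere B d A k | v ∈ A ⊔ C ∧ w ∈ A ⊔ C}.ncard =
      {C ∈ sphere B d A k | v' ∈ A ⊔ C ∧ w' ∈ A ⊔ C}.ncard := by
  have h : ∀ {v w : V}, v ∉ A → w ∉ A ⊔ span F {v} →
      LinearIndependent F (A.mkQ ∘ ![w, v]) := by
    intro v w hv hw
    rw [linearIndependent_fin2]
    refine ⟨by simpa using hv, fun a ha => hw ?_⟩
    have h1 : w - a • v ∈ A := by
      rw [← Submodule.ker_mkQ A, LinearMap.mem_ker, map_sub, sub_eq_zero, map_smul]
      exact ha.symm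
    have := add_mem (mem_sup_left (T := span F {v}) h1)
      (mem_sup_right (S := A) (smul_mem _ a (mem_span_singleton_self v)))
    simpa using this
  have := ncard_generatorsNear hB hA hA (fun n => n + k = d) (h hv hw) (h hv' hw')
  simpa [generatorsNear, sphere, and_assoc, Fin.forall_fin_two, and_comm] using this

lemma ncard_sphere_point_mul (hB : IsSymplectic B d) {A : Submodule F V}
    (hA : IsIsotropic B d A) (k : ℕ) {v : V} (hv : v ∉ A) :
    {C ∈ sphere B d A k | v ∈ A ⊔ C}.ncard * (Nat.card F ^ d - 1) =
      (sphere B d A k).ncard * (Nat.card F ^ k - 1) := by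
  have := Module.finite_of_finite F (M := V)
  have h := ncard_mul_eq_ncard_mul (fun (C : Submodule F V) (x : V) => x ∈ A ⊔ C)
    (S := sphere B d A k) (T := (A : Set V)ᶜ)
    (m := Nat.card F ^ d * (Nat.card F ^ k - 1))
    (n := {C ∈ sphere B d A k | v ∈ A ⊔ C}.ncard)
    (fun C hC => ?_) (fun x hx => ncard_sphere_point hB hA hA k hx hv)
  · have h2 : ((A : Set V)ᶜ).ncard = Nat.card F ^ d * (Nat.card F ^ d - 1) := by
      have := ncard_diff_coe (le_top : A ≤ ⊤)
      rw [finrank_top, hB.finrank_eq, hA.1] at this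
      rw [Nat.mul_sub, ← pow_add, ← two_mul, mul_one, ← this]
      simp [Set.compl_eq_univ_sdiff]
    rw [h2] at h
    have hq : 0 < Nat.card F ^ d := pow_pos Nat.card_pos _
    refine Nat.eq_of_mul_eq_mul_left hq ?_
    linarith
  · have := ncard_diff_coe (le_sup_left : A ≤ A ⊔ C)
    rw [hA.1, show finrank F ↥(A ⊔ C) = d + k by
      have := hA.finrank_sup hC.1
      have := hC.2
      omega] at this
    rw [Nat.mul_sub, ← pow_add, mul_one, ← this]
    congr 1
    ext x
    simp [and_comm]

lemma ncard_sphere_pair_mul (hB : IsSymplectic B d) {A : Submodule F V}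
    (hA : IsIsotropic B d A) (k : ℕ) {v w : V} (hv : v ∉ A) (hw : w ∉ A ⊔ span F {v}) :
    {C ∈ sphere B d A (k + 1) | v ∈ A ⊔ C ∧ w ∈ A ⊔ C}.ncard * (Nat.card F ^ (d - 1) - 1) =
      {C ∈ sphere B d A (k + 1) | v ∈ A ⊔ C}.ncard * (Nat.card F ^ k - 1) := by
  have := Module.finite_of_finite F (M := V)
  have hAv := finrank_sup_span_singleton hv
  rw [hA.1] at hAv
  have hd : 1 ≤ d := by
    have := (A ⊔ span F {v}).finrank_le
    have := hB.finrank_eq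
    omega
  have h := ncard_mul_eq_ncard_mul (fun (C : Submodule F V) (x : V) => x ∈ A ⊔ C)
    (S := {C ∈ sphere B d A (k + 1) | v ∈ A ⊔ C}) (T := ((A ⊔ span F {v} : Submodule F V) : Set V)ᶜ)
    (m := Nat.card F ^ (d + 1) * (Nat.card F ^ k - 1))
    (n := {C ∈ sphere B d A (k + 1) | v ∈ A ⊔ C ∧ w ∈ A ⊔ C}.ncard)
    (fun C hC => ?_) (fun x hx => ?_)
  · have h2 : (((A ⊔ span F {v} : Submodule F V) : Set V)ᶜ).ncard =
        Nat.card F ^ (d + 1) * (Nat.card F ^ (d - 1) - 1) := by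
      have := ncard_diff_coe (le_top : A ⊔ span F {v} ≤ ⊤)
      rw [finrank_top, hB.finrank_eq, hAv] at this
      rw [Nat.mul_sub, ← pow_add, show d + 1 + (d - 1) = 2 * d by omega, mul_one, ← this]
      simp [Set.compl_eq_univ_sdiff]
    rw [h2] at h
    have hq : 0 < Nat.card F ^ (d + 1) := pow_pos Nat.card_pos _
    refine Nat.eq_of_mul_eq_mul_left hq ?_
    linarith
  · have hle : A ⊔ span F {v} ≤ A ⊔ C := sup_le le_sup_left (by simpa using hC.2)
    have := ncard_diff_coe hle
    rw [hAv, show finrank F ↥(A ⊔ C) = d + 1 + k by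
      have := hA.finrank_sup hC.1.1
      have := hC.1.2
      omega] at this
    rw [Nat.mul_sub, ← pow_add, mul_one, ← this]
    congr 1
    ext x
    simp [and_comm]
  · rw [← ncard_sphere_pair hB hA (k + 1) hv hx hv hw]
    congr 1
    ext C
    simp [and_assoc]

lemma ncard_sphere_succ (hB : IsSymplectic B d) {A : Submodule F V}
    (hA : IsIsotropic B d A) (hd : 1 ≤ d) (k : ℕ) :
    (sphere B d A k).ncard * Nat.card F ^ d + (sphere B d A (k + 1)).ncard ≤
      (sphere B d A k).ncard * Nat.card F ^ k +
        (sphere B d A (k + 1)).ncard * Nat.card F ^ (k + 1) := by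
  obtain ⟨A', hA', hAA'⟩ := exists_adjacent hB hd hA
  obtain ⟨v, hvA', hv⟩ : ∃ v ∈ A', v ∉ A := by
    by_contra! h
    have h1 : A ⊓ A' = A' := inf_eq_right.2 h
    rw [h1, hA'.1] at hAA'
    omega
  obtain ⟨v', hvA, hv'⟩ : ∃ v ∈ A, v ∉ A' := by
    by_contra! h
    have h1 : A ⊓ A' = A := inf_eq_left.2 h
    rw [h1, hA.1] at hAA'
    omega
  have h1 := ncard_sphere_point_mul hB hA k hv
  have h2 := ncard_sphere_point_mul hB hA (k + 1) hv
  rw [ncard_sphere_point hB hA hA' (k + 1) hv hv'] at h2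
  have hsub : sphere B d A k ⊆ {C ∈ sphere B d A k | v ∈ A ⊔ C} ∪
      {C ∈ sphere B d A' (k + 1) | v' ∈ A' ⊔ C} := by
    intro C hC
    by_cases hvC : v ∈ A ⊔ C
    · exact Or.inl ⟨hC, hvC⟩
    · have h := inf_adjacent hB hA hA' hC.1 hAA' (fun h => hvC (h hvA'))
      have := hC.2
      exact Or.inr ⟨⟨hC.1, by omega⟩, h.2 hvA⟩
  have h3 := (Set.ncard_le_ncard hsub).trans (Set.ncard_union_le _ _)
  have hq : ∀ n, 1 ≤ Nat.card F ^ n := fun n => Nat.one_le_pow _ _ Nat.card_pos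
  have e1 := hq d
  have e2 := hq k
  have e3 := hq (k + 1)
  zify [e1, e2, e3] at h1 h2 h3 ⊢
  nlinarith

lemma ncard_sphere_mul_le (hB : IsSymplectic B d) {A : Submodule F V}
    (hA : IsIsotropic B d A) {k : ℕ} (hk : 2 * k + 2 ≤ d) :
    (sphere B d A k).ncard * Nat.card F ^ d ≤
      (sphere B d A (k + 1)).ncard * Nat.card F ^ (k + 1) := by
  have h := ncard_sphere_succ hB hA (by omega) k
  have hq : 2 ≤ Nat.card F := Finite.one_lt_card
  have h1 : Nat.card F ^ (2 * k + 2) ≤ Nat.card F ^ d := Nat.pow_le_pow_right (by omega) hk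
  set a := (sphere B d A k).ncard
  set b := (sphere B d A (k + 1)).ncard
  have hk1 : Nat.card F ^ (2 * k + 2) = Nat.card F ^ (k + 1) * Nat.card F ^ (k + 1) := by
    rw [← pow_add]; congr 1; omega
  have hk2 : Nat.card F ^ (k + 1) = Nat.card F ^ k * Nat.card F := pow_succ _ _
  have hpos : 0 < Nat.card F ^ k := pow_pos (by omega) _
  suffices a * Nat.card F ^ k ≤ b by omega
  set x := Nat.card F ^ k
  set q := Nat.card F
  by_contra! hlt
  rw [hk1, hk2] at h1
  rw [hk2] at h
  have h2 : a * (x * q * (x * q)) ≤ a * q ^ d := Nat.mul_le_mul_left _ h1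
  have h3 : b * (x * q) ≤ a * x * (x * q) := Nat.mul_le_mul_right _ hlt.le
  have h4 : a * x * (x * q) * 2 ≤ a * x * (x * q) * q := Nat.mul_le_mul_left _ hq
  have h5 : a * x * 2 ≤ a * x * (x * q) :=
    Nat.mul_le_mul_left _ (hq.trans (Nat.le_mul_of_pos_left _ hpos))
  have hax : 0 < a * x := by omega
  nlinarith

lemma ncard_sphere_pos (hB : IsSymplectic B d) {A : Submodule F V}
    (hA : IsIsotropic B d A) : ∀ {k : ℕ}, 2 * k ≤ d → 0 < (sphere B d A k).ncard
  | 0, _ => by simp [sphere_zero hA]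
  | k + 1, hk => by
    have h := ncard_sphere_mul_le hB hA (k := k) (by omega)
    have hp := ncard_sphere_pos hB hA (k := k) (by omega)
    have hq : 0 < Nat.card F ^ d := pow_pos Nat.card_pos _
    exact Nat.pos_of_mul_pos_right ((Nat.mul_pos hp hq).trans_le h)

/-- Spheres dominate the balls they bound. -/
lemma ncard_open_ball_mul_le (hB : IsSymplectic B d) {A : Submodule F V}
    (hA : IsIsotropic B d A) : ∀ {k : ℕ}, 2 * k ≤ d →
    {C | IsIsotropic B d C ∧ d < finrank F ↥(C ⊓ A) + k}.ncard * Nat.card F ^ d ≤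
      (sphere B d A k).ncard * Nat.card F ^ (2 * k)
  | 0, _ => by
    have : {C | IsIsotropic B d C ∧ d < finrank F ↥(C ⊓ A) + 0} = ∅ := by
      ext C
      simp only [Set.mem_ofPred_eq, Set.mem_empty_iff_false, iff_false, not_and, not_lt]
      intro hC
      rw [← hC.1]
      exact finrank_mono inf_le_left
    rw [this]
    simp
  | k + 1, hk => by
    have ih := ncard_open_ball_mul_le hB hA (k := k) (by omega)
    have hs := ncard_sphere_mul_le hB hA (k := k) (by omega)
    have hsub : {C | IsIsotropic B d C ∧ d < finrank F ↥(C ⊓ A) + (k + 1)} ⊆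
        {C | IsIsotropic B d C ∧ d < finrank F ↥(C ⊓ A) + k} ∪ sphere B d A k := by
      rintro C ⟨hC, h⟩
      by_cases h' : d < finrank F ↥(C ⊓ A) + k
      · exact Or.inl ⟨hC, h'⟩
      · exact Or.inr ⟨hC, by omega⟩
    have hc := (Set.ncard_le_ncard hsub).trans (Set.ncard_union_le _ _)
    have hq : 2 ≤ Nat.card F := Finite.one_lt_card
    have h1 : Nat.card F ^ (2 * k) ≤ Nat.card F ^ d :=
      Nat.pow_le_pow_right (by omega) (by omega)
    have h2 : 2 ≤ Nat.card F ^ (k + 1) := hq.trans (Nat.le_self_pow (by omega) _)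
    calc _ ≤ (_ + (sphere B d A k).ncard) * Nat.card F ^ d := Nat.mul_le_mul_right _ hc
      _ ≤ (sphere B d A k).ncard * Nat.card F ^ d * 2 := by
        rw [add_mul, mul_two]
        exact Nat.add_le_add_right (ih.trans (Nat.mul_le_mul_left _ h1)) _
      _ ≤ (sphere B d A (k + 1)).ncard * Nat.card F ^ (k + 1) * Nat.card F ^ (k + 1) :=
        Nat.mul_le_mul hs h2
      _ = _ := by rw [mul_assoc, ← pow_add]; congr 2; omega

/-- Counting generators `C` through the vectors of `A + C` in a fixed subspace `E`. -/
lemma ncard_mul_le_of_inf_ne {A E : Submodule F V} (hA : IsIsotropic B d A) (hAE : A ≤ E)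
    {r n : ℕ} (hE : finrank F E = d + r) {𝒞 : Set (Submodule F V)}
    (hne : ∀ C ∈ 𝒞, (A ⊔ C) ⊓ E ≠ A)
    (hn : ∀ v ∈ E, v ∉ A → {C ∈ 𝒞 | v ∈ A ⊔ C}.ncard ≤ n) :
    𝒞.ncard * (Nat.card F - 1) ≤ (Nat.card F ^ r - 1) * n := by
  have := Module.finite_of_finite F (M := V)
  have h := ncard_mul_le_ncard_mul (fun (C : Submodule F V) (x : V) => x ∈ A ⊔ C)
    (S := 𝒞) (T := (E : Set V) \ A) (m := Nat.card F ^ d * (Nat.card F - 1)) (n := n)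
    (fun C hC => ?_) (fun x hx => hn x hx.1 hx.2)
  · rw [ncard_diff_coe hAE, hE, hA.1, pow_add] at h
    have hq : 0 < Nat.card F ^ d := pow_pos Nat.card_pos _
    refine Nat.le_of_mul_le_mul_left ?_ hq
    rw [← Nat.mul_sub_one] at h
    linarith
  · have hle : A ≤ (A ⊔ C) ⊓ E := le_inf le_sup_left hAE
    have h1 := ncard_diff_coe hle
    have h2 := finrank_lt_finrank_of_lt (hle.lt_of_ne' (hne C hC))
    rw [hA.1] at h1 h2
    have h3 : Nat.card F ^ (d + 1) ≤ Nat.card F ^ finrank F ↥((A ⊔ C) ⊓ E) :=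
      Nat.pow_le_pow_right Nat.card_pos h2
    calc _ = Nat.card F ^ (d + 1) - Nat.card F ^ d := by rw [Nat.mul_sub_one, pow_succ]
      _ ≤ _ := Nat.sub_le_sub_right h3 _
      _ = _ := h1.symm
      _ = _ := by
        congr 1
        ext x
        simp only [coe_inf, Set.mem_sdiff, Set.mem_inter_iff, SetLike.mem_coe, Set.mem_ofPred_eq]
        tauto

/-- Upper bound for the number of generators through an isotropic subspace of codimension `m` in
the generators containing it. -/
lemma ncard_generators_through_le (hB : IsSymplectic B d) : ∀ (m : ℕ) {k : ℕ},
    k + m = d → ∀ {P : Submodule F V}, IsIsotropic B k P →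
    {W | IsIsotropic B d W ∧ P ≤ W}.ncard ≤ ∏ i ∈ Finset.range m, (Nat.card F ^ (i + 1) + 1)
  | 0, k, hk, P, hP => by
    simp only [Finset.range_zero, Finset.prod_empty]
    rw [Set.ncard_le_one_iff_eq]
    refine Or.inr ⟨P, Set.eq_singleton_iff_unique_mem.2 ⟨⟨?_, le_rfl⟩, ?_⟩⟩
    · rwa [← hk, add_zero]
    · rintro W ⟨hW, hPW⟩
      refine (eq_of_le_of_finrank_eq hPW ?_).symm
      have := hP.1
      have := hW.1
      omega
  | m + 1, k, hk, P, hP => by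
    have := Module.finite_of_finite F (M := V)
    rw [Finset.prod_range_succ]
    set g := ∏ i ∈ Finset.range m, (Nat.card F ^ (i + 1) + 1)
    have h := ncard_mul_le_ncard_mul (fun (W : Submodule F V) (x : V) => x ∈ W)
      (S := {W | IsIsotropic B d W ∧ P ≤ W}) (T := (B.orthogonal P : Set V) \ P)
      (m := Nat.card F ^ k * (Nat.card F ^ (m + 1) - 1)) (n := g)
      (fun W hW => ?_) (fun x hx => ?_)
    · have h1 := hB.finrank_orthogonal_add P
      rw [hP.1] at h1
      have h2 : finrank F (B.orthogonal P) = k + ((m + 1) + (m + 1)) := by omega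
      rw [ncard_diff_coe hP.le_orthogonal, h2, hP.1, pow_add _ k,
        pow_add _ (m + 1) (m + 1), ← Nat.mul_sub_one] at h
      have hq : 0 < Nat.card F ^ k := pow_pos Nat.card_pos _
      have hq2 : 1 < Nat.card F ^ (m + 1) := Nat.one_lt_pow (by omega) Finite.one_lt_card
      have h3 : Nat.card F ^ (m + 1) * Nat.card F ^ (m + 1) - 1 =
          (Nat.card F ^ (m + 1) - 1) * (Nat.card F ^ (m + 1) + 1) := by
        rw [mul_comm (_ - 1), ← Nat.mul_self_sub_mul_self_eq]
      rw [h3] at h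
      refine Nat.le_of_mul_le_mul_left ?_ (Nat.mul_pos hq (Nat.sub_pos_of_lt hq2))
      linarith
    · have hle : W ≤ B.orthogonal P := by
        rw [← hW.1.orthogonal_eq hB]
        exact B.orthogonal_le hW.2
      have h1 := ncard_diff_coe hW.2
      rw [hW.1.1, hP.1, ← hk, pow_add, ← Nat.mul_sub_one] at h1
      rw [← h1]
      refine (congrArg Set.ncard ?_).le
      ext x
      simp only [Set.mem_sdiff, SetLike.mem_coe, Set.mem_ofPred_eq]
      exact ⟨fun hx => ⟨⟨hle hx.1, hx.2⟩, hx.1⟩, fun hx => ⟨hx.2, hx.1.2⟩⟩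
    · refine le_trans (Set.ncard_le_ncard ?_)
        (ncard_generators_through_le hB m (by omega) (hP.sup_span hB hx.1 hx.2))
      rintro W ⟨⟨hW, hPW⟩, hxW⟩
      exact ⟨hW, sup_le hPW (by simpa using hxW)⟩

lemma prod_pow_add_one_le {q : ℕ} (hq : 3 ≤ q) (m : ℕ) :
    ∏ i ∈ Finset.range m, (q ^ (i + 1) + 1) ≤ 2 * q ^ (m * (m + 1) / 2) := by
  suffices h : (∏ i ∈ Finset.range m, (q ^ (i + 1) + 1)) * q ^ m + q ^ (m * (m + 1) / 2) ≤
      2 * q ^ (m * (m + 1) / 2) * q ^ m from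
    Nat.le_of_mul_le_mul_right ((Nat.le_add_right _ _).trans h) (pow_pos (by omega) _)
  induction m with
  | zero => simp
  | succ m ih =>
    have htri : (m + 1) * (m + 1 + 1) / 2 = m * (m + 1) / 2 + (m + 1) := by
      rw [show (m + 1) * (m + 1 + 1) = m * (m + 1) + (m + 1) * 2 by ring]
      exact Nat.add_mul_div_right _ _ (by norm_num)
    rw [Finset.prod_range_succ, htri, pow_add q (m * (m + 1) / 2), pow_succ q m]
    set g := ∏ i ∈ Finset.range m, (q ^ (i + 1) + 1)
    set e := q ^ (m * (m + 1) / 2)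
    have hx : 1 ≤ q ^ m := Nat.one_le_pow _ _ (by omega)
    set x := q ^ m
    have h1 : (g * x + e) * (q * (x * q + 1)) ≤ 2 * e * x * (q * (x * q + 1)) :=
      Nat.mul_le_mul_right _ ih
    have h2 : e * q * x * 3 ≤ e * q * x * q := Nat.mul_le_mul_left _ hq
    nlinarith [Nat.zero_le (e * q)]

lemma ncard_star (hB : IsSymplectic B d) {A : Submodule F V} (hA : IsIsotropic B d A)
    {v : V} (hv : v ∉ A) {s : ℕ} (hs : s + 1 ≤ d) :
    (star B d s (A ⊓ B.orthogonal (span F {v}))).ncard =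
      (ball B d A s).ncard + {C ∈ sphere B d A (s + 1) | v ∈ A ⊔ C}.ncard := by
  rw [star_eq_union hB hA hv hs, Set.ncard_union_eq]
  refine Set.disjoint_left.2 fun C hC hC' => ?_
  have := hC.2
  have := hC'.1.2
  omega

lemma ncard_star_eq (hB : IsSymplectic B d) {U U' : Submodule F V} {s : ℕ} (hs : s + 1 ≤ d)
    (hU : IsIsotropic B (d - 1) U) (hU' : IsIsotropic B (d - 1) U') :
    (star B d s U).ncard = (star B d s U').ncard := by
  obtain ⟨A, v, hA, hv, rfl⟩ := exists_eq_inf_orthogonal_span hB (by omega) hU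
  obtain ⟨A', v', hA', hv', rfl⟩ := exists_eq_inf_orthogonal_span hB (by omega) hU'
  have h := ncard_sphere_point hB hA hA' (s + 1) hv hv'
  rw [ncard_star hB hA hv hs, ncard_star hB hA' hv' hs, ncard_ball hB hA hA', h]

/-- Some generator has a large part of a given EKR set close to it. -/
lemma exists_center (hB : IsSymplectic B d) (hq : 3 ≤ Nat.card F) {s : ℕ}
    {Y : Set (Submodule F V)} (hY : IsEKR B d (2 * s + 1) Y) (hne : Y.Nonempty) :
    ∃ A, IsIsotropic B d A ∧
      Y.ncard ≤ 2 * Nat.card F ^ ((2 * s + 1) * (s + 1)) * (Y ∩ ball B d A s).ncard := by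
  obtain ⟨⟨W₀, W₁⟩, ⟨h₀, h₁⟩, hmin⟩ := Set.exists_min_image (Y ×ˢ Y)
    (fun p => finrank F ↥(p.1 ⊓ p.2)) (Set.toFinite _) (hne.prod hne)
  simp only at h₀ h₁ hmin
  set P := W₀ ⊓ W₁ with hPdef
  have hP : IsIsotropic B (finrank F P) P :=
    ⟨rfl, fun x hx y hy => (hY.1 _ h₀).2 x hx.1 y hy.1⟩
  obtain ⟨A, ⟨hA, hPA⟩, hmax⟩ := Set.exists_max_image {W | IsIsotropic B d W ∧ P ≤ W}
    (fun A => (Y ∩ ball B d A s).ncard) (Set.toFinite _) ⟨W₀, hY.1 _ h₀, inf_le_left⟩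
  refine ⟨A, hA, ?_⟩
  have h := ncard_mul_le_ncard_mul (fun C A => C ∈ ball B d A s) (S := Y)
    (T := {W | IsIsotropic B d W ∧ P ≤ W}) (m := 1) (n := (Y ∩ ball B d A s).ncard)
    (fun C hC => ?_) (fun W hW => hmax W hW)
  · have hPd : finrank F P ≤ d := by
      rw [← (hY.1 _ h₀).1]
      exact finrank_mono inf_le_left
    have hm : d - (2 * s + 1) ≤ finrank F P := hY.2 _ h₀ _ h₁
    obtain ⟨m, hm'⟩ : ∃ m, finrank F P + m = d := ⟨d - finrank F P, by omega⟩
    have h1 := (ncard_generators_through_le hB m hm' hP).trans (prod_pow_add_one_le hq m)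
    have h2 : m * (m + 1) / 2 ≤ (2 * s + 1) * (s + 1) := by
      refine Nat.div_le_of_le_mul ?_
      have : m ≤ 2 * s + 1 := by omega
      calc m * (m + 1) ≤ (2 * s + 1) * (2 * s + 1 + 1) := Nat.mul_le_mul this (by omega)
        _ = _ := by ring
    rw [mul_one] at h
    refine h.trans (Nat.mul_le_mul_right _ (h1.trans (Nat.mul_le_mul_left _ ?_)))
    exact Nat.pow_le_pow_right (by omega) h2
  · obtain ⟨A', hA', hPA', hCA'⟩ := exists_near_generator hB (hY.1 _ h₀) (hY.1 _ h₁) (hY.1 _ hC)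
      (hmin (C, W₀) ⟨hC, h₀⟩) (hmin (C, W₁) ⟨hC, h₁⟩)
    refine (Set.ncard_pos (Set.toFinite _)).2 ⟨A', ⟨hA', hPA'⟩, hY.1 _ hC, ?_⟩
    have := hY.2 _ h₀ _ h₁
    omega

/-- A large EKR set with a large part near `A` lies in the ball of radius `s + 1` around `A`. -/
lemma le_finrank_inf_of_center (hB : IsSymplectic B d) (hq : 3 ≤ Nat.card F) {s : ℕ}
    (hd : 2 * s ^ 2 + 7 * s + 4 < d) {Y : Set (Submodule F V)} (hY : IsEKR B d (2 * s + 1) Y)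
    {A : Submodule F V} (hA : IsIsotropic B d A)
    (hc : Y.ncard ≤ 2 * Nat.card F ^ ((2 * s + 1) * (s + 1)) * (Y ∩ ball B d A s).ncard)
    (hS : (sphere B d A s).ncard ≤ Y.ncard) {C' : Submodule F V} (hC' : C' ∈ Y) :
    d ≤ finrank F ↥(C' ⊓ A) + (s + 1) := by
  by_contra! hlt
  have hSpos := ncard_sphere_pos hB hA (k := s) (by nlinarith)
  obtain ⟨r, hr⟩ : ∃ r, finrank F ↥(C' ⊓ A) + r = d := ⟨d - finrank F ↥(C' ⊓ A), by omega⟩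
  obtain ⟨C₀, hC₀, hC₀A⟩ : (Y ∩ ball B d A s).Nonempty := by
    rw [← Set.ncard_pos]
    exact Nat.pos_of_mul_pos_left ((hSpos.trans_le hS).trans_le hc)
  have hr3 : r ≤ 3 * s + 1 := by
    have h := finrank_inf_add_le C₀ C' A
    have := (hY.1 _ hC₀).1
    have h1 := hC₀A.2
    have := hY.2 _ hC' _ hC₀
    rw [inf_comm] at h1
    omega
  obtain ⟨v, hvC', hv⟩ : ∃ v ∈ C', v ∉ A := by
    by_contra! h
    have h1 := (hY.1 _ hC').1
    rw [← inf_eq_left.2 (show C' ≤ A from h)] at h1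
    omega
  set q := Nat.card F with hqdef
  set T := {C ∈ sphere B d A s | v ∈ A ⊔ C}.ncard with hT
  set S := (sphere B d A s).ncard
  set β := (Y ∩ sphere B d A s).ncard
  have hβ : β * (q - 1) ≤ (q ^ r - 1) * T := by
    refine ncard_mul_le_of_inf_ne hA le_sup_left (E := A ⊔ C') ?_ ?_ ?_
    · have := hA.finrank_sup (hY.1 _ hC')
      omega
    · intro C hC h
      have h1 := IsIsotropic.finrank_inf_add_finrank_inf hB hA (hY.1 _ hC.1) (hY.1 _ hC') h
      have h2 := hY.2 _ hC.1 _ hC'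
      have h3 := hC.2.2
      rw [inf_comm A C, inf_comm A C'] at h1
      have : 7 * s < d := by nlinarith
      omega
    · intro w _ hw
      rw [hT, ncard_sphere_point hB hA hA s hv hw]
      exact Set.ncard_le_ncard fun C hC => ⟨hC.1.2, hC.2⟩
  have hTQ : T * q ^ d ≤ S * q ^ s := by
    have h := ncard_sphere_point_mul hB hA s hv
    have hle : T ≤ S := Set.ncard_le_ncard (Set.sep_subset _ _)
    have h1 : 1 ≤ q ^ d := Nat.one_le_pow _ _ (by omega)
    have h2 : 1 ≤ q ^ s := Nat.one_le_pow _ _ (by omega)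
    rw [Nat.mul_sub_one, Nat.mul_sub_one] at h
    have h3 : T ≤ T * q ^ d := Nat.le_mul_of_pos_right _ h1
    have h4 : S ≤ S * q ^ s := Nat.le_mul_of_pos_right _ h2
    change T * q ^ d - T = S * q ^ s - S at h
    omega
  have hβQ : β * q ^ d ≤ S * q ^ (4 * s + 1) := by
    calc β * q ^ d ≤ β * (q - 1) * q ^ d :=
          Nat.mul_le_mul_right _ (Nat.le_mul_of_pos_right _ (by omega))
      _ ≤ q ^ r * T * q ^ d :=
          Nat.mul_le_mul_right _ (hβ.trans (Nat.mul_le_mul_right _ (Nat.sub_le _ _)))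
      _ ≤ q ^ r * (S * q ^ s) := by
          rw [mul_assoc]
          exact Nat.mul_le_mul_left _ hTQ
      _ = S * q ^ (r + s) := by ring
      _ ≤ _ := Nat.mul_le_mul_left _ (Nat.pow_le_pow_right (by omega) (by omega))
  have hb := ncard_open_ball_mul_le hB hA (k := s) (by nlinarith)
  have hbQ := hb.trans (Nat.mul_le_mul_left _
    (Nat.pow_le_pow_right (n := Nat.card F) (by omega) (show 2 * s ≤ 4 * s + 1 by omega)))
  have hsub : Y ∩ ball B d A s ⊆
      {C | IsIsotropic B d C ∧ d < finrank F ↥(C ⊓ A) + s} ∪ (Y ∩ sphere B d A s) := by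
    rintro C ⟨hC, hCi, hCA⟩
    by_cases h : d < finrank F ↥(C ⊓ A) + s
    · exact Or.inl ⟨hCi, h⟩
    · exact Or.inr ⟨hC, hCi, by omega⟩
  have hcard := (Set.ncard_le_ncard hsub).trans (Set.ncard_union_le _ _)
  set G := q ^ ((2 * s + 1) * (s + 1)) with hG
  have key : S * q ^ d ≤ S * (4 * (G * q ^ (4 * s + 1))) := by
    calc S * q ^ d ≤ 2 * G * (_ + β) * q ^ d :=
          Nat.mul_le_mul_right _ (hS.trans (hc.trans (Nat.mul_le_mul_left _ hcard)))
      _ ≤ 2 * G * (S * q ^ (4 * s + 1) + S * q ^ (4 * s + 1)) := by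
          rw [mul_assoc, add_mul]
          exact Nat.mul_le_mul_left _ (Nat.add_le_add hbQ hβQ)
      _ = _ := by ring
  have key' := Nat.le_of_mul_le_mul_left key hSpos
  have h4 : 4 * (G * q ^ (4 * s + 1)) ≤ q ^ (2 * s ^ 2 + 7 * s + 4) := by
    calc _ ≤ q ^ 2 * (G * q ^ (4 * s + 1)) := Nat.mul_le_mul_right _ (by nlinarith)
      _ = _ := by rw [hG]; ring
  exact (Nat.pow_lt_pow_right (by omega) hd).not_ge (key'.trans h4)

/-- A large EKR set in the ball of radius `s + 1` around `A` lies in an extremal example. -/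
lemma exists_subset_star (hB : IsSymplectic B d) (hq : 3 ≤ Nat.card F) {s : ℕ}
    (hd : 3 * s + 3 ≤ d) {Y : Set (Submodule F V)} (hY : IsEKR B d (2 * s + 1) Y)
    {A : Submodule F V} (hA : IsIsotropic B d A)
    (hYA : ∀ C ∈ Y, d ≤ finrank F ↥(C ⊓ A) + (s + 1))
    (hcard : ∀ v ∉ A,
      (star B d s (A ⊓ B.orthogonal (span F {v}))).ncard ≤ Y.ncard) :
    ∃ v ∉ A, Y ⊆ star B d s (A ⊓ B.orthogonal (span F {v})) := by
  set Y' := Y ∩ sphere B d A (s + 1) with hY'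
  have hsub : Y ⊆ ball B d A s ∪ Y' := by
    intro C hC
    have := hYA C hC
    by_cases h : d ≤ finrank F ↥(C ⊓ A) + s
    · exact Or.inl ⟨hY.1 C hC, h⟩
    · exact Or.inr ⟨hC, hY.1 C hC, by omega⟩
  by_contra! hcon
  have hex : ∀ v ∉ A, ∃ C ∈ Y', v ∉ A ⊔ C := by
    intro v hv
    by_contra! h
    refine hcon v hv ?_
    rw [star_eq_union hB hA hv (by omega)]
    refine hsub.trans (Set.union_subset_union_right _ fun C hC => ⟨hC.2, h C hC⟩)
  have hinf : ∀ C ∈ Y', ∀ C' ∈ Y', (A ⊔ C) ⊓ (A ⊔ C') ≠ A := by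
    intro C hC C' hC' h
    have h1 := IsIsotropic.finrank_inf_add_finrank_inf hB hA hC.2.1 hC'.2.1 h
    have h2 := hY.2 _ hC.1 _ hC'.1
    have h3 := hC.2.2
    have h4 := hC'.2.2
    rw [inf_comm A C, inf_comm A C'] at h1
    omega
  have hsup : ∀ C ∈ Y', finrank F ↥(A ⊔ C) = d + (s + 1) := by
    intro C hC
    have := hA.finrank_sup hC.2.1
    have := hC.2.2
    omega
  have exists_notMem : ∀ W : Submodule F V, finrank F W < 2 * d → ∃ v, v ∉ W := by
    intro W hW
    by_contra! h
    rw [eq_top_iff'.2 h, finrank_top, hB.finrank_eq] at hW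
    omega
  obtain ⟨v₀, hv₀⟩ := exists_notMem A (by rw [hA.1]; omega)
  obtain ⟨w₀, hw₀⟩ := exists_notMem (A ⊔ span F {v₀}) (by
    rw [finrank_sup_span_singleton hv₀, hA.1]; omega)
  have hT2 := ncard_sphere_pair_mul hB hA s hv₀ hw₀
  have hT := ncard_sphere_point_mul hB hA (s + 1) hv₀
  have hlarge := hcard v₀ hv₀
  rw [ncard_star hB hA hv₀ (by omega)] at hlarge
  set T := {C ∈ sphere B d A (s + 1) | v₀ ∈ A ⊔ C}.ncard
  set T2 := {C ∈ sphere B d A (s + 1) | v₀ ∈ A ⊔ C ∧ w₀ ∈ A ⊔ C}.ncard with hT2def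
  set q := Nat.card F with hqdef
  have hpoint : ∀ v ∉ A, {C ∈ Y' | v ∈ A ⊔ C}.ncard ≤ (q ^ (s + 1) - 1) * T2 := by
    intro v hv
    obtain ⟨C₂, hC₂, hvC₂⟩ := hex v hv
    refine (Nat.le_mul_of_pos_right _ (by omega : 0 < q - 1)).trans
      (ncard_mul_le_of_inf_ne hA le_sup_left (hsup C₂ hC₂) ?_ ?_)
    · exact fun C hC => hinf C hC.1 C₂ hC₂
    · intro w hwC₂ hw
      have hwv : w ∉ A ⊔ span F {v} := by
        intro h
        obtain ⟨a, ha, y, hy, rfl⟩ := mem_sup.1 h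
        obtain ⟨c, rfl⟩ := mem_span_singleton.1 hy
        have hc : c ≠ 0 := by
          rintro rfl
          exact hw (by simpa using ha)
        have h1 : c • v ∈ A ⊔ C₂ := by
          simpa using sub_mem hwC₂ (mem_sup_left (T := C₂) ha)
        exact hvC₂ ((smul_mem_iff _ hc).1 h1)
      rw [hT2def, ncard_sphere_pair hB hA (s + 1) hv₀ hw₀ hv hwv]
      exact Set.ncard_le_ncard fun C hC => ⟨hC.1.1.2, hC.1.2, hC.2⟩
  obtain ⟨C₁, hC₁, -⟩ := hex v₀ hv₀
  have hY'card : Y'.ncard ≤ (q ^ (s + 1) - 1) * ((q ^ (s + 1) - 1) * T2) :=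
    (Nat.le_mul_of_pos_right _ (by omega : 0 < q - 1)).trans
      (ncard_mul_le_of_inf_ne hA le_sup_left (hsup C₁ hC₁) (fun C hC => hinf C hC C₁ hC₁)
        fun v _ hv => hpoint v hv)
  have hx : 1 < q ^ (s + 1) := Nat.one_lt_pow (by omega) (by omega)
  have hTpos : 0 < T := by
    have h1 := ncard_sphere_pos hB hA (k := s + 1) (by omega)
    exact Nat.pos_of_mul_pos_right (hT ▸ Nat.mul_pos h1 (Nat.sub_pos_of_lt hx))
  have hlt : (q ^ (s + 1) - 1) * (q ^ (s + 1) - 1) * (q ^ s - 1) < q ^ (d - 1) - 1 := by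
    have h1 : q ^ (s + 1) * q ^ (s + 1) * q ^ s ≤ q ^ (d - 1) := by
      rw [← pow_add, ← pow_add]
      exact Nat.pow_le_pow_right (by omega) (by omega)
    have h2 : 1 ≤ q ^ s := Nat.one_le_pow _ _ (by omega)
    have h3 : (q ^ (s + 1) - 1) * (q ^ (s + 1) - 1) * (q ^ s - 1) ≤
        q ^ (s + 1) * q ^ (s + 1) * (q ^ s - 1) :=
      Nat.mul_le_mul_right _ (Nat.mul_le_mul (Nat.sub_le _ _) (Nat.sub_le _ _))
    rw [Nat.mul_sub_one (q ^ (s + 1) * q ^ (s + 1))] at h3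
    have h4 : q ^ (s + 1) * q ^ (s + 1) ≤ q ^ (s + 1) * q ^ (s + 1) * q ^ s :=
      Nat.le_mul_of_pos_right _ h2
    have h5 : 1 < q ^ (s + 1) * q ^ (s + 1) := by nlinarith
    omega
  have hY'lt : Y'.ncard < T := by
    refine lt_of_mul_lt_mul_right ?_ (Nat.zero_le (q ^ (d - 1) - 1))
    calc Y'.ncard * (q ^ (d - 1) - 1)
        ≤ (q ^ (s + 1) - 1) * ((q ^ (s + 1) - 1) * T2) * (q ^ (d - 1) - 1) :=
          Nat.mul_le_mul_right _ hY'card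
      _ = (q ^ (s + 1) - 1) * (q ^ (s + 1) - 1) * (T2 * (q ^ (d - 1) - 1)) := by ring
      _ = T * ((q ^ (s + 1) - 1) * (q ^ (s + 1) - 1) * (q ^ s - 1)) := by rw [hT2]; ring
      _ < T * (q ^ (d - 1) - 1) := Nat.mul_lt_mul_of_pos_left hlt hTpos
  have hle := (Set.ncard_le_ncard hsub).trans (Set.ncard_union_le _ _)
  omega

/-- EKR sets of maximum size are the extremal examples. -/
lemma IsEKR.exists_eq_star (hB : IsSymplectic B d) (hq : 3 ≤ Nat.card F) {s : ℕ}
    (hd : 2 * s ^ 2 + 7 * s + 4 < d) {Y : Set (Submodule F V)} (hY : IsEKR B d (2 * s + 1) Y)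
    (hmax : ∀ Z, IsEKR B d (2 * s + 1) Z → Z.ncard ≤ Y.ncard) :
    ∃ U, IsIsotropic B (d - 1) U ∧ Y = star B d s U := by
  have hd3 : 3 * s + 3 ≤ d := by nlinarith
  have hstar : ∀ A, IsIsotropic B d A → ∀ v ∉ A,
      (star B d s (A ⊓ B.orthogonal (span F {v}))).ncard ≤ Y.ncard := fun A hA v hv =>
    hmax _ (isEKR_star (hA.inf_orthogonal_span hB hv) (by omega))
  have hsphere : ∀ A, IsIsotropic B d A → (sphere B d A s).ncard ≤ Y.ncard := by
    intro A hA
    obtain ⟨v, hv⟩ : ∃ v, v ∉ A := by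
      by_contra! h
      have h1 := hA.1
      rw [eq_top_iff'.2 h, finrank_top, hB.finrank_eq] at h1
      omega
    refine (Set.ncard_le_ncard ?_).trans (hstar A hA v hv)
    rw [star_eq_union hB hA hv (by omega)]
    exact fun C hC => Or.inl ⟨hC.1, hC.2.ge⟩
  have hne : Y.Nonempty := by
    obtain ⟨A, hA⟩ := exists_isIsotropic hB d le_rfl
    rw [← Set.ncard_pos]
    exact (ncard_sphere_pos hB hA (by omega)).trans_le (hsphere A hA)
  obtain ⟨A, hA, hc⟩ := exists_center hB hq hY hne
  obtain ⟨v, hv, hsub⟩ := exists_subset_star hB hq hd3 hY hA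
    (fun C hC => le_finrank_inf_of_center hB hq hd hY hA hc (hsphere A hA) hC) (hstar A hA)
  exact ⟨_, hA.inf_orthogonal_span hB hv, Set.eq_of_subset_of_ncard_le hsub (hstar A hA v hv)⟩

/-- The extremal examples have maximum size. -/
lemma IsEKR.ncard_le_ncard_star (hB : IsSymplectic B d) (hq : 3 ≤ Nat.card F) {s : ℕ}
    (hd : 2 * s ^ 2 + 7 * s + 4 < d) {U : Submodule F V} (hU : IsIsotropic B (d - 1) U)
    {Z : Set (Submodule F V)} (hZ : IsEKR B d (2 * s + 1) Z) :
    Z.ncard ≤ (star B d s U).ncard := by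
  obtain ⟨M, hM, hmax⟩ := Set.exists_max_image {M | IsEKR B d (2 * s + 1) M} Set.ncard
    (Set.toFinite _) ⟨Z, hZ⟩
  obtain ⟨U', hU', rfl⟩ := IsEKR.exists_eq_star hB hq hd hM hmax
  rw [ncard_star_eq hB (by omega) hU hU']
  exact hmax Z hZ

end Counting

end SymplecticEKR

theorem stmt19 (F : Type*) [Field F] [Fintype F] (hq : 3 ≤ Fintype.card F)
    (V : Type*) [AddCommGroup V] [Module F V] [FiniteDimensional F V]
    (d t : ℕ) (hV : Module.finrank F V = 2 * d)
    (B : LinearMap.BilinForm F V) (hBnd : B.Nondegenerate)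
    (hBalt : ∀ x : V, B x x = 0)
    (ht : Odd t) (ht1 : 1 ≤ t) (htd : 5 * (t + 2) ^ 2 ≤ 8 * d)
    (Y : Set (Submodule F V))
    (hYgen : ∀ W ∈ Y, Module.finrank F W = d ∧ ∀ x ∈ W, ∀ y ∈ W, B x y = 0)
    (hYekr : ∀ W₁ ∈ Y, ∀ W₂ ∈ Y, d - t ≤ Module.finrank F ↥(W₁ ⊓ W₂)) :
    (∀ Z : Set (Submodule F V),
        (∀ W ∈ Z, Module.finrank F W = d ∧ ∀ x ∈ W, ∀ y ∈ W, B x y = 0) →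
        (∀ W₁ ∈ Z, ∀ W₂ ∈ Z, d - t ≤ Module.finrank F ↥(W₁ ⊓ W₂)) →
        Z.ncard ≤ Y.ncard)
      ↔ ∃ U : Submodule F V,
          (Module.finrank F U = d - 1 ∧ ∀ x ∈ U, ∀ y ∈ U, B x y = 0) ∧
          Y = {W : Submodule F V |
                (Module.finrank F W = d ∧ ∀ x ∈ W, ∀ y ∈ W, B x y = 0) ∧
                d - (t + 1) / 2 ≤ Module.finrank F ↥(W ⊓ U)} := by
  have hB : SymplecticEKR.IsSymplectic B d := ⟨hBnd, hBalt, hV⟩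
  have hq' : 3 ≤ Nat.card F := by rwa [Nat.card_eq_fintype_card]
  obtain ⟨s, rfl⟩ := ht
  have hd : 2 * s ^ 2 + 7 * s + 4 < d := by nlinarith
  rw [show (2 * s + 1 + 1) / 2 = s + 1 by omega]
  constructor
  · intro hmax
    exact SymplecticEKR.IsEKR.exists_eq_star hB hq' hd ⟨hYgen, hYekr⟩
      fun Z hZ => hmax Z hZ.1 hZ.2
  · rintro ⟨U, hU, rfl⟩ Z hZgen hZekr
    exact SymplecticEKR.IsEKR.ncard_le_ncard_star hB hq' hd hU ⟨hZgen, hZekr⟩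
end
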